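/- arXiv:2408.04148 — 8 statements merged into one kernel-verified Lean document; each statement's English description precedes it below -/
import Mathlib

section
/- Let f : [0,∞) → [0,∞) be a bounded function that is either antitone or continuous. Suppose that for every α > 0 and every ε > 0 there exists M > 0 such that ξ^(−α) ≤ ε·f(ξ) for all ξ ≥ M (i.e. limsup_{ξ→+∞} ξ^(−α)/f(ξ) = 0 for every α > 0). Then there exist a Borel probability measure μ on ℝ with μ(ℝ \ 𝕃) = 0 and constants C > 0, M' > 0 such that |μ̂(ξ)| ≤ C·f(|ξ|) for all ξ ∈ ℝ with |ξ| ≥ M'. -/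
open MeasureTheory Filter Set

/-- The Fourier transform of a measure on `ℝ`: `μ̂(ξ) = ∫ e^(−2πiξx) dμ(x)`. -/
noncomputable def fourierT (μ : Measure ℝ) (ξ : ℝ) : ℂ :=
  ∫ x, Complex.exp (((-2 * Real.pi * ξ * x : ℝ) : ℂ) * Complex.I) ∂μ

/-- The additive character `e(y) = exp(2πiy)`. -/
noncomputable def ex (y : ℝ) : ℂ := Complex.exp (((2 * Real.pi * y : ℝ) : ℂ) * Complex.I)

lemma ex_add (a b : ℝ) : ex (a + b) = ex a * ex b := by
  unfold ex; rw [← Complex.exp_add]; congr 1; push_cast; ring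

lemma norm_ex (a : ℝ) : ‖ex a‖ = 1 := Complex.norm_exp_ofReal_mul_I _

lemma ex_zero : ex 0 = 1 := by simp [ex]

lemma ex_int (n : ℤ) : ex n = 1 := by
  unfold ex
  rw [show (((2 * Real.pi * (n : ℝ) : ℝ) : ℂ) * Complex.I) = n * (2 * Real.pi * Complex.I) by
    push_cast; ring]
  exact Complex.exp_int_mul_two_pi_mul_I n

lemma continuous_ex : Continuous ex := by unfold ex; fun_prop

lemma fourierT_eq (μ : Measure ℝ) (ξ : ℝ) : fourierT μ ξ = ∫ x, ex (-ξ * x) ∂μ := by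
  unfold fourierT ex; congr 1; ext x; congr 3; ring

lemma ex_eq_fourier (n : ℤ) (x : ℝ) : fourier n (x : UnitAddCircle) = ex (n * x) := by
  rw [fourier_coe_apply]
  unfold ex
  congr 1; push_cast; ring

/-- Fourier series of the second periodic Bernoulli function, on `[-1, 1]`. -/
lemma hasSum_bern (s : ℝ) (hs : |s| ≤ 1) :
    HasSum (fun n : ℤ => 1 / (n : ℂ) ^ 2 * ex (n * s))
      ((2 * Real.pi ^ 2 * (s ^ 2 - |s| + 6⁻¹) : ℝ) : ℂ) := by
  rcases le_total 0 s with h | h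
  · rw [abs_of_nonneg h] at hs ⊢
    have := hasSum_one_div_pow_mul_fourier_mul_bernoulliFun (le_refl 2) (x := s) ⟨h, hs⟩
    simp_rw [ex_eq_fourier] at this
    convert this using 1
    rw [bernoulliFun_two]
    push_cast
    rw [mul_pow, Complex.I_sq]
    rw [show ((Nat.factorial 2 : ℕ) : ℂ) = 2 by norm_num [Nat.factorial]]
    ring
  · rw [abs_of_nonpos h] at hs ⊢
    have := hasSum_one_div_pow_mul_fourier_mul_bernoulliFun (le_refl 2) (x := s + 1)
      ⟨by linarith, by linarith⟩
    simp_rw [ex_eq_fourier] at this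
    convert this using 1
    · ext n
      rw [show (n : ℝ) * (s + 1) = n * s + n by ring, ex_add, ex_int, mul_one]
    rw [bernoulliFun_two]
    push_cast
    rw [mul_pow, Complex.I_sq]
    rw [show ((Nat.factorial 2 : ℕ) : ℂ) = 2 by norm_num [Nat.factorial]]
    ring

/-- The Fourier coefficients of the periodized tent. -/
noncomputable def tentC (δ : ℝ) (n : ℤ) : ℂ :=
  (if n = 0 then 1 else 0) +
    (2 - ex (n * δ) - ex (n * (-δ))) / ((4 * Real.pi ^ 2 * δ ^ 2 : ℝ) : ℂ) * (1 / (n : ℂ) ^ 2)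

noncomputable def tent (δ y : ℝ) : ℝ := max 0 (δ - |y - round y|) / δ ^ 2

lemma tent_aux (δ : ℝ) (hδ : 0 < δ) (t : ℝ) :
    1 + (2 * (2 * Real.pi ^ 2 * (t ^ 2 - |t| + 6⁻¹)) -
      2 * Real.pi ^ 2 * ((t + δ) ^ 2 - |t + δ| + 6⁻¹) -
      2 * Real.pi ^ 2 * ((t - δ) ^ 2 - |t - δ| + 6⁻¹)) / (4 * Real.pi ^ 2 * δ ^ 2)
      = max 0 (δ - |t|) / δ ^ 2 := by
  have hpi := Real.pi_pos
  have key : |t + δ| + |t - δ| - 2 * |t| = 2 * max 0 (δ - |t|) := by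
    rcases abs_cases t with h1 | h1 <;> rcases abs_cases (t + δ) with h2 | h2 <;>
    rcases abs_cases (t - δ) with h3 | h3 <;> rcases max_cases 0 (δ - |t|) with h4 | h4 <;> linarith
  have : max 0 (δ - |t|) = (|t + δ| + |t - δ| - 2 * |t|) / 2 := by linarith
  rw [this]
  field_simp
  ring

lemma hasSum_tent (δ : ℝ) (hδ : 0 < δ) (hδ' : δ ≤ 1 / 2) (y : ℝ) :
    HasSum (fun n : ℤ => tentC δ n * ex (n * y)) (tent δ y : ℂ) := by
  set t := y - round y with ht
  have hper : ∀ n : ℤ, ex (n * y) = ex (n * t) := by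
    intro n
    rw [show (n : ℝ) * y = n * t + (n * round y : ℤ) by push_cast; rw [ht]; ring, ex_add, ex_int,
      mul_one]
  have habs : |t| ≤ 1 / 2 := abs_sub_round y
  rw [abs_le] at habs
  have h0 := hasSum_bern t (abs_le.2 ⟨by linarith, by linarith⟩)
  have h1 := hasSum_bern (t + δ) (abs_le.2 ⟨by linarith, by linarith⟩)
  have h2 := hasSum_bern (t - δ) (abs_le.2 ⟨by linarith, by linarith⟩)
  have h3 : HasSum (fun n : ℤ => if n = 0 then (1 : ℂ) else 0) 1 := hasSum_ite_eq 0 1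
  have h4 := h3.add ((((h0.mul_left 2).sub h1).sub h2).div_const
    ((4 * Real.pi ^ 2 * δ ^ 2 : ℝ) : ℂ))
  convert h4 using 1
  · ext n
    rw [hper, tentC, mul_add (n : ℝ) t δ, sub_eq_add_neg t δ, mul_add (n : ℝ) t (-δ), ex_add, ex_add]
    by_cases hn : n = 0
    · subst hn; simp [ex_zero]
    · simp only [hn, if_false]; ring
  · unfold tent
    rw [← ht, ← tent_aux δ hδ t]
    push_cast
    ring

lemma tentC_zero (δ : ℝ) : tentC δ 0 = 1 := by simp [tentC]

lemma two_sub_ex (θ : ℝ) : 2 - ex θ - ex (-θ) = ((2 - 2 * Real.cos (2 * Real.pi * θ) : ℝ) : ℂ) := by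
  unfold ex
  rw [Complex.exp_mul_I, Complex.exp_mul_I]
  rw [mul_neg, Complex.ofReal_neg, Complex.cos_neg, Complex.sin_neg]
  push_cast
  ring

lemma norm_tentC_aux (δ : ℝ) (n : ℤ) (hn : n ≠ 0) :
    ‖tentC δ n‖ = (2 - 2 * Real.cos (2 * Real.pi * (n * δ))) / (4 * Real.pi ^ 2 * δ ^ 2 * n ^ 2) := by
  have : tentC δ n = (((2 - 2 * Real.cos (2 * Real.pi * (n * δ))) / (4 * Real.pi ^ 2 * δ ^ 2 * n ^ 2) : ℝ) : ℂ) := by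
    unfold tentC
    rw [mul_neg, two_sub_ex]
    simp only [hn, if_false]
    push_cast
    rw [zero_add, div_mul_div_comm, mul_one]
  rw [this, Complex.norm_real, Real.norm_of_nonneg]
  have := Real.cos_le_one (2 * Real.pi * (n * δ))
  apply div_nonneg (by linarith) (by positivity)

lemma norm_tentC_le_one (δ : ℝ) (hδ : 0 < δ) (n : ℤ) : ‖tentC δ n‖ ≤ 1 := by
  by_cases hn : n = 0
  · subst hn; simp [tentC_zero]
  rw [norm_tentC_aux δ n hn]
  have := Real.one_sub_sq_div_two_le_cos (x := 2 * Real.pi * (n * δ))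
  apply div_le_one_of_le₀ _ (by positivity)
  nlinarith

lemma norm_tentC_le (δ : ℝ) (hδ : 0 < δ) (n : ℤ) (hn : n ≠ 0) :
    ‖tentC δ n‖ ≤ 1 / (δ * n) ^ 2 := by
  rw [norm_tentC_aux δ n hn]
  have := Real.neg_one_le_cos (2 * Real.pi * (n * δ))
  have hpi := Real.pi_gt_three
  have hn' : (0 : ℝ) < (n : ℝ) ^ 2 := by positivity
  rw [div_le_div_iff₀ (by positivity) (by positivity)]
  have h2 : 0 < (δ * n) ^ 2 := by positivity
  have : 4 * Real.pi ^ 2 * δ ^ 2 * n ^ 2 = 4 * Real.pi ^ 2 * (δ * n) ^ 2 := by ring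
  rw [this]
  nlinarith [mul_pos h2 h2, mul_le_mul_of_nonneg_right (show (4:ℝ) ≤ 4 * Real.pi ^ 2 by nlinarith) h2.le]

lemma tent_nonneg (δ y : ℝ) : 0 ≤ tent δ y := by unfold tent; positivity

lemma tent_supp (δ y : ℝ) (h : tent δ y ≠ 0) : |y - round y| < δ := by
  by_contra hc
  push Not at hc
  apply h
  unfold tent
  rw [max_eq_left (by linarith), zero_div]

noncomputable def qC (δ : ℝ) (q : ℕ) (m : ℤ) : ℂ :=
  if (q : ℤ) ∣ m then tentC δ (m / q) * ex ((m / q : ℤ) * (-(2 * δ))) else 0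

lemma hasSum_qC (δ : ℝ) (hδ : 0 < δ) (hδ' : δ ≤ 1 / 2) (q : ℕ) (hq : 0 < q) (x : ℝ) :
    HasSum (fun m : ℤ => qC δ q m * ex (m * x)) (tent δ (q * x - 2 * δ) : ℂ) := by
  have hq' : (q : ℤ) ≠ 0 := by positivity
  have hinj : Function.Injective (fun n : ℤ => (q : ℤ) * n) := fun a b h => by
    exact mul_left_cancel₀ hq' h
  rw [← hinj.hasSum_iff]
  · convert hasSum_tent δ hδ hδ' (q * x - 2 * δ) using 1
    ext n
    simp only [Function.comp, qC, dvd_mul_right, if_true, Int.mul_ediv_cancel_left _ hq']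
    rw [mul_assoc, ← ex_add]
    congr 2
    push_cast
    ring
  · intro m hm
    have : ¬ (q : ℤ) ∣ m := by
      rintro ⟨n, rfl⟩
      exact hm ⟨n, rfl⟩
    simp [qC, this]

lemma qC_zero (δ : ℝ) (q : ℕ) : qC δ q 0 = 1 := by simp [qC, tentC_zero, ex_zero]

lemma norm_qC (δ : ℝ) (q : ℕ) (m : ℤ) :
    ‖qC δ q m‖ = if (q : ℤ) ∣ m then ‖tentC δ (m / q)‖ else 0 := by
  unfold qC
  split_ifs <;> simp [norm_ex]

lemma norm_qC_le_one (δ : ℝ) (hδ : 0 < δ) (q : ℕ) (m : ℤ) : ‖qC δ q m‖ ≤ 1 := by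
  rw [norm_qC]
  split_ifs
  · exact norm_tentC_le_one δ hδ _
  · exact zero_le_one

lemma norm_qC_le (δ : ℝ) (hδ : 0 < δ) (q L : ℕ) (hq : 0 < q) (hqL : q ≤ L) (m : ℤ) (hm : m ≠ 0) :
    ‖qC δ q m‖ ≤ (L / δ / |(m : ℝ)|) ^ 2 := by
  rw [norm_qC]
  split_ifs with h
  · obtain ⟨n, rfl⟩ := h
    have hq' : (q : ℤ) ≠ 0 := by positivity
    have hn : n ≠ 0 := by rintro rfl; simp at hm
    rw [Int.mul_ediv_cancel_left _ hq']
    refine (norm_tentC_le δ hδ n hn).trans ?_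
    rw [div_pow, sq_abs, div_pow]
    push_cast
    have hn' : (0 : ℝ) < (n : ℝ) ^ 2 := by positivity
    have hq2 : (0 : ℝ) < q := by positivity
    have hL : (q : ℝ) ≤ L := by exact_mod_cast hqL
    rw [div_div, div_le_div_iff₀ (by positivity) (by positivity)]
    have : (q : ℝ) ^ 2 ≤ L ^ 2 := by gcongr
    have h3 : 0 ≤ δ ^ 2 * (n : ℝ) ^ 2 := by positivity
    nlinarith
  · positivity

lemma card_primeFactors_le (m : ℕ) (hm : m ≠ 0) (α : ℝ) (hα : 0 < α) :
    (m.primeFactors.card : ℝ) ≤ 2 / α * (m : ℝ) ^ α := by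
  have h1 : 2 ^ m.primeFactors.card ≤ m := by
    calc 2 ^ m.primeFactors.card ≤ ∏ p ∈ m.primeFactors, p := by
          apply Finset.pow_card_le_prod
          intro p hp
          exact (Nat.prime_of_mem_primeFactors hp).two_le
      _ ≤ m := Nat.le_of_dvd (Nat.pos_of_ne_zero hm) (Nat.prod_primeFactors_dvd m)
  have h2 : (m.primeFactors.card : ℝ) * Real.log 2 ≤ Real.log m := by
    rw [← Real.log_pow]
    apply Real.log_le_log (by positivity)
    exact_mod_cast h1
  have h3 := Real.log_le_rpow_div (x := m) (by positivity) hα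
  have h4 := Real.log_two_gt_d9
  have h5 : (m.primeFactors.card : ℝ) * (1 / 2) ≤ (m.primeFactors.card : ℝ) * Real.log 2 := by
    gcongr; linarith
  have : 2 / α * (m : ℝ) ^ α = 2 * ((m : ℝ) ^ α / α) := by ring
  linarith

noncomputable def bC (L : ℕ) (δ : ℝ) (m : ℤ) : ℂ :=
  (∑ q ∈ L.primesLE, qC δ q m) / (L.primesLE.card : ℂ)

noncomputable def avgF (L : ℕ) (δ x : ℝ) : ℝ :=
  (∑ q ∈ L.primesLE, tent δ (q * x - 2 * δ)) / (L.primesLE.card : ℝ)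

lemma card_pos_primesLE (L : ℕ) (hL : 2 ≤ L) : 0 < L.primesLE.card :=
  Finset.card_pos.2 ⟨2, by simp [Nat.mem_primesLE, hL, Nat.prime_two]⟩

lemma bC_zero (L : ℕ) (hL : 2 ≤ L) (δ : ℝ) : bC L δ 0 = 1 := by
  have := card_pos_primesLE L hL
  simp only [bC, qC_zero, Finset.sum_const, nsmul_eq_mul, mul_one]
  apply div_self
  exact_mod_cast this.ne'

lemma hasSum_bC (L : ℕ) (δ : ℝ) (hδ : 0 < δ) (hδ' : δ ≤ 1 / 2) (x : ℝ) :
    HasSum (fun m : ℤ => bC L δ m * ex (m * x)) (avgF L δ x : ℂ) := by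
  have h := (hasSum_sum (s := L.primesLE) (f := fun q m => qC δ q m * ex ((m : ℤ) * x))
    (a := fun q => (tent δ (q * x - 2 * δ) : ℂ)) (fun q hq =>
      hasSum_qC δ hδ hδ' q (Nat.mem_primesLE.1 hq).2.pos x)).div_const (L.primesLE.card : ℂ)
  have e1 : (fun m : ℤ => bC L δ m * ex (m * x)) =
      fun m : ℤ => (∑ q ∈ L.primesLE, qC δ q m * ex (m * x)) / (L.primesLE.card : ℂ) := by
    funext m
    simp only [bC]
    rw [← Finset.sum_mul]; ring
  have e2 : (avgF L δ x : ℂ) =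
      (∑ q ∈ L.primesLE, (tent δ (q * x - 2 * δ) : ℂ)) / (L.primesLE.card : ℂ) := by
    simp only [avgF]; push_cast; rfl
  rw [e1, e2]
  exact h

lemma norm_bC_le (L : ℕ) (hL : 2 ≤ L) (δ : ℝ) (hδ : 0 < δ) (m : ℤ) (hm : m ≠ 0) :
    ‖bC L δ m‖ ≤ (L / δ / |(m : ℝ)|) ^ 2 := by
  have := card_pos_primesLE L hL
  unfold bC
  rw [norm_div, Complex.norm_natCast, div_le_iff₀ (by positivity)]
  refine (norm_sum_le _ _).trans ?_
  rw [mul_comm, ← nsmul_eq_mul]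
  apply Finset.sum_le_card_nsmul
  intro q hq
  have hq := Nat.mem_primesLE.1 hq
  exact norm_qC_le δ hδ q L hq.2.pos hq.1 m hm

lemma norm_bC_le_rpow (L : ℕ) (hL : 2 ≤ L) (δ : ℝ) (hδ : 0 < δ) (m : ℤ) (hm : m ≠ 0)
    (α : ℝ) (hα : 0 < α) (hα1 : α ≤ 1) :
    ‖bC L δ m‖ ≤ 2 / α * (L / δ) ^ (2 * α) / L.primesLE.card * |(m : ℝ)| ^ (-α) := by
  have hN := card_pos_primesLE L hL
  have hm' : 0 < |(m : ℝ)| := by positivity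
  set u : ℝ := L / δ / |(m : ℝ)| with hu
  have hu0 : 0 < u := by positivity
  have hq : ∀ q ∈ L.primesLE, ‖qC δ q m‖ ≤ if (q : ℤ) ∣ m then u ^ (2 * α) else 0 := by
    intro q hq
    have hq := Nat.mem_primesLE.1 hq
    by_cases hd : (q : ℤ) ∣ m
    · rw [if_pos hd]
      rcases le_total 1 u with h | h
      · exact (norm_qC_le_one δ hδ q m).trans (Real.one_le_rpow h (by positivity))
      · refine (norm_qC_le δ hδ q L hq.2.pos hq.1 m hm).trans ?_
        rw [← hu, ← Real.rpow_natCast]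
        exact Real.rpow_le_rpow_of_exponent_ge hu0 h (by push_cast; linarith)
    · rw [if_neg hd, norm_qC, if_neg hd]
  have hcard : ((L.primesLE.filter (fun q : ℕ => (q : ℤ) ∣ m)).card : ℝ) ≤
      2 / α * |(m : ℝ)| ^ α := by
    have h1 := card_primeFactors_le m.natAbs (by simpa using hm) α hα
    rw [Nat.cast_natAbs, Int.cast_abs] at h1
    refine le_trans ?_ h1
    norm_cast
    apply Finset.card_le_card
    intro q hq
    rw [Finset.mem_filter, Nat.mem_primesLE] at hq
    rw [Nat.mem_primeFactors]
    exact ⟨hq.1.2, Int.natCast_dvd.1 hq.2, by simpa using hm⟩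
  have hsum : ‖∑ q ∈ L.primesLE, qC δ q m‖ ≤ 2 / α * |(m : ℝ)| ^ α * u ^ (2 * α) := by
    refine (norm_sum_le _ _).trans ((Finset.sum_le_sum hq).trans ?_)
    rw [← Finset.sum_filter, Finset.sum_const, nsmul_eq_mul]
    gcongr
  unfold bC
  rw [norm_div, Complex.norm_natCast]
  rw [hu, Real.div_rpow (by positivity) hm'.le] at hsum
  have e : 2 / α * |(m : ℝ)| ^ α * ((L / δ) ^ (2 * α) / |(m : ℝ)| ^ (2 * α)) / L.primesLE.card =
      2 / α * (L / δ) ^ (2 * α) / L.primesLE.card * |(m : ℝ)| ^ (-α) := by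
    have h2 : |(m : ℝ)| ^ (-α) = |(m : ℝ)| ^ α / |(m : ℝ)| ^ (2 * α) := by
      rw [← Real.rpow_sub hm']; congr 1; ring
    rw [h2]; ring
  rw [← e]
  gcongr

lemma avgF_nonneg (L : ℕ) (δ x : ℝ) : 0 ≤ avgF L δ x :=
  div_nonneg (Finset.sum_nonneg fun _ _ => tent_nonneg _ _) (by positivity)

/-- The closed set carrying the density `avgF`. -/
def carrier (L : ℕ) (δ : ℝ) : Set ℝ :=
  ⋃ q ∈ L.primesLE, {x : ℝ | δ ≤ |q * x - round (q * x)| ∧ |q * x - round (q * x)| ≤ 3 * δ}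

lemma isClosed_carrier (L : ℕ) (δ : ℝ) : IsClosed (carrier L δ) := by
  refine Set.Finite.isClosed_biUnion (Finset.finite_toSet _) ?_
  intro q _
  have hc : Continuous (fun x : ℝ => |q * x - round (q * x)|) := by
    have : (fun x : ℝ => |q * x - round (q * x)|) =
        fun x : ℝ => ‖((q * x : ℝ) : UnitAddCircle)‖ := by
      ext x; rw [UnitAddCircle.norm_eq]
    rw [this]
    exact continuous_norm.comp ((AddCircle.continuous_mk' 1).comp (by fun_prop))
  exact (isClosed_le continuous_const hc).inter (isClosed_le hc continuous_const)

lemma tent_shift_supp (δ y : ℝ) (hδ : 0 < δ) (hδ' : δ ≤ 1 / 6) (h : tent δ (y - 2 * δ) ≠ 0) :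
    δ ≤ |y - round y| ∧ |y - round y| ≤ 3 * δ := by
  have h1 := tent_supp _ _ h
  set r := round (y - 2 * δ) with hr
  rw [abs_lt] at h1
  have hy : round y = r := by
    rw [round_eq, Int.floor_eq_iff]
    constructor <;> linarith
  rw [hy, abs_of_nonneg (by linarith)]
  constructor <;> linarith

lemma avgF_supp (L : ℕ) (δ x : ℝ) (hδ : 0 < δ) (hδ' : δ ≤ 1 / 6) (h : avgF L δ x ≠ 0) :
    x ∈ carrier L δ := by
  have : ∑ q ∈ L.primesLE, tent δ (q * x - 2 * δ) ≠ 0 := by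
    intro h0; apply h; unfold avgF; rw [h0, zero_div]
  obtain ⟨q, hq, hne⟩ := Finset.exists_ne_zero_of_sum_ne_zero this
  exact Set.mem_biUnion hq (tent_shift_supp δ _ hδ hδ' hne)

lemma carrier_subset (L k : ℕ) (x : ℝ) (hL : 2 ≤ L)
    (hx : x ∈ carrier L (1 / (3 * (L : ℝ) ^ (k + 1)))) :
    ∃ a b : ℤ, 1 < b ∧ x ≠ a / b ∧ |x - a / b| < 1 / (b : ℝ) ^ k := by
  simp only [carrier, Set.mem_iUnion] at hx
  obtain ⟨q, hq, h1, h2⟩ := hx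
  have hq := Nat.mem_primesLE.1 hq
  have hq2 : (0 : ℝ) < q := by exact_mod_cast hq.2.pos
  have hqL : (q : ℝ) ≤ L := by exact_mod_cast hq.1
  have hLp : (0 : ℝ) < L := by positivity
  refine ⟨round (q * x), q, by exact_mod_cast hq.2.one_lt, ?_, ?_⟩
  · intro he
    have : (q : ℝ) * x - round (q * x) = 0 := by
      push_cast at he
      rw [eq_div_iff hq2.ne'] at he
      linarith
    rw [this, abs_zero] at h1
    have : (0 : ℝ) < 1 / (3 * (L : ℝ) ^ (k + 1)) := by positivity
    linarith
  · have e : x - round (q * x) / ((q : ℤ) : ℝ) = (q * x - round (q * x)) / q := by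
      push_cast; field_simp
    rw [e, abs_div, abs_of_pos hq2, div_lt_iff₀ hq2]
    refine h2.trans_lt ?_
    push_cast
    have e2 : 3 * (1 / (3 * (L : ℝ) ^ (k + 1))) = 1 / (L : ℝ) ^ (k + 1) := by field_simp
    rw [e2, one_div_mul_eq_div, div_lt_div_iff₀ (by positivity) (by positivity)]
    have hq3 : (2 : ℝ) ≤ q := by exact_mod_cast hq.2.two_le
    have hpow : (q : ℝ) ^ k ≤ L ^ k := by gcongr
    have hpk : 0 < (L : ℝ) ^ k := by positivity
    have : (L : ℝ) ^ k < q * (L : ℝ) ^ (k + 1) := by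
      rw [pow_succ]
      have : 2 ≤ (L : ℝ) := by exact_mod_cast hL
      nlinarith [mul_le_mul hq3 this (by norm_num) (by linarith)]
    linarith

lemma exists_sum_bound : ∃ S > (0 : ℝ), ∀ ξ : ℝ,
    Summable (fun m : ℤ => (1 + |ξ - m|) ^ (-(3 / 2) : ℝ)) ∧
    ∑' m : ℤ, (1 + |ξ - m|) ^ (-(3 / 2) : ℝ) ≤ S := by
  have hbase : Summable (fun m : ℤ => (1 + |(m : ℝ)|) ^ (-(3 / 2) : ℝ)) := by
    have h1 : Summable (fun m : ℤ => |(m : ℝ)| ^ (-(3 / 2) : ℝ)) :=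
      Real.summable_abs_int_rpow (by norm_num)
    have h2 : Summable (fun m : ℤ => if m = 0 then (1 : ℝ) else 0) := (hasSum_ite_eq 0 1).summable
    refine Summable.of_nonneg_of_le (fun m => by positivity) (fun m => ?_) (h1.add h2)
    by_cases hm : m = 0
    · subst hm; simp
    · simp only [hm, if_false, add_zero]
      apply Real.rpow_le_rpow_of_nonpos (by positivity) (by linarith) (by norm_num)
  set a : ℤ → ℝ := fun m => (1 + |(m : ℝ)|) ^ (-(3 / 2) : ℝ) with ha
  set c : ℝ := (1 / 2 : ℝ) ^ (-(3 / 2) : ℝ) with hc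
  have hle : ∀ (ξ : ℝ) (m : ℤ), (1 + |ξ - m|) ^ (-(3 / 2) : ℝ) ≤ c * a (m - ⌊ξ⌋) := by
    intro ξ m
    rw [hc, ha, ← Real.mul_rpow (by positivity) (by positivity)]
    apply Real.rpow_le_rpow_of_nonpos (by positivity) _ (by norm_num)
    push_cast
    have h1 := Int.floor_le ξ
    have h2 := Int.lt_floor_add_one ξ
    have h3 : |(m : ℝ) - ⌊ξ⌋| ≤ |ξ - m| + 1 := by
      rcases abs_cases ((m : ℝ) - ⌊ξ⌋) with h | h <;> rcases abs_cases (ξ - m) with h' | h' <;>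
        linarith
    have := abs_nonneg (ξ - m)
    linarith
  have hsh : ∀ ξ : ℝ, HasSum (fun m : ℤ => c * a (m - ⌊ξ⌋)) (c * ∑' m, a m) := by
    intro ξ
    have := ((Equiv.subRight ⌊ξ⌋).hasSum_iff (f := a)).2 hbase.hasSum
    exact this.mul_left c
  refine ⟨c * ∑' m, a m + 1, ?_, fun ξ => ?_⟩
  · have : 0 ≤ c * ∑' m, a m := mul_nonneg (by positivity) (tsum_nonneg fun m => by positivity)
    linarith
  · have hs : Summable (fun m : ℤ => (1 + |ξ - m|) ^ (-(3 / 2) : ℝ)) :=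
      Summable.of_nonneg_of_le (fun m => by positivity) (hle ξ) (hsh ξ).summable
    refine ⟨hs, ?_⟩
    have := hs.tsum_le_tsum (hle ξ) (hsh ξ).summable
    rw [(hsh ξ).tsum_eq] at this
    linarith

lemma inv_sq_le (v : ℝ) (hv : 1 ≤ v) : 1 / v ^ 2 ≤ v ^ (-(3 / 2) : ℝ) := by
  rw [one_div, ← Real.rpow_natCast, ← Real.rpow_neg (by linarith)]
  exact Real.rpow_le_rpow_of_exponent_le hv (by norm_num)

/-- first convolution estimate (pointwise) -/
lemma conv_one (ξ : ℝ) (m : ℤ) (hm : m ≠ 0) (α : ℝ) (hα : 0 < α) (hα' : α ≤ 1 / 2) :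
    |(m : ℝ)| ^ (-α) * (1 / (1 + |ξ - m|) ^ 2) ≤
      2 * (1 + |ξ|) ^ (-α) * (1 + |ξ - m|) ^ (-(3 / 2) : ℝ) := by
  have hm1 : 1 ≤ |(m : ℝ)| := by
    exact_mod_cast Int.one_le_abs hm
  set v := 1 + |ξ - m| with hv
  have hv1 : 1 ≤ v := by have := abs_nonneg (ξ - m); linarith
  have hv0 : 0 < v := by linarith
  have hw : 1 + |ξ| ≤ 2 * |(m : ℝ)| * v := by
    have h1 : |ξ| ≤ |ξ - m| + |(m : ℝ)| := by
      have := abs_add_le (ξ - m) m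
      simpa using this
    have h2 := abs_nonneg (ξ - m)
    nlinarith
  have h1 : (2 * |(m : ℝ)| * v) ^ (-α) ≤ (1 + |ξ|) ^ (-α) :=
    Real.rpow_le_rpow_of_nonpos (by positivity) hw (by linarith)
  rw [Real.mul_rpow (by positivity) hv0.le, Real.mul_rpow (by positivity) (by positivity)] at h1
  have h2 : (1 / 2 : ℝ) ≤ 2 ^ (-α) := by
    calc (1 / 2 : ℝ) = 2 ^ (-1 : ℝ) := by rw [Real.rpow_neg_one]; norm_num
      _ ≤ 2 ^ (-α) := Real.rpow_le_rpow_of_exponent_le (by norm_num) (by linarith)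
  have h3 : v ^ (-(1 / 2) : ℝ) ≤ v ^ (-α) := Real.rpow_le_rpow_of_exponent_le hv1 (by linarith)
  have h4 : 1 / v ^ 2 = v ^ (-(1 / 2) : ℝ) * v ^ (-(3 / 2) : ℝ) := by
    rw [← Real.rpow_add hv0, one_div, ← Real.rpow_natCast, ← Real.rpow_neg hv0.le]
    norm_num
  rw [h4]
  have hM : 0 < |(m : ℝ)| ^ (-α) := by positivity
  have h5 : |(m : ℝ)| ^ (-α) * v ^ (-(1 / 2) : ℝ) ≤ 2 * (1 + |ξ|) ^ (-α) := by
    calc |(m : ℝ)| ^ (-α) * v ^ (-(1 / 2) : ℝ)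
        ≤ |(m : ℝ)| ^ (-α) * v ^ (-α) := by gcongr
      _ = 2 * (1 / 2 * |(m : ℝ)| ^ (-α) * v ^ (-α)) := by ring
      _ ≤ 2 * (2 ^ (-α) * |(m : ℝ)| ^ (-α) * v ^ (-α)) := by gcongr
      _ ≤ _ := by gcongr
  calc _ = (|(m : ℝ)| ^ (-α) * v ^ (-(1 / 2) : ℝ)) * v ^ (-(3 / 2) : ℝ) := by ring
    _ ≤ _ := by gcongr

/-- second convolution estimate (pointwise) -/
lemma conv_two (ξ : ℝ) (m : ℤ) :
    1 / (1 + |(m : ℝ)|) ^ 2 * (1 / (1 + |ξ - m|) ^ 2) ≤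
      2 / (1 + |ξ|) ^ 2 * ((1 + |ξ - m|) ^ (-(3 / 2) : ℝ) + (1 + |0 - (m : ℝ)|) ^ (-(3 / 2) : ℝ)) := by
  have h1 : |ξ| ≤ |ξ - m| + |(m : ℝ)| := by
    have := abs_add_le (ξ - m) m
    simpa using this
  have hu : 1 ≤ 1 + |(m : ℝ)| := by have := abs_nonneg (m : ℝ); linarith
  have hv : 1 ≤ 1 + |ξ - m| := by have := abs_nonneg (ξ - m); linarith
  rw [zero_sub, abs_neg]
  refine le_trans ?_ (mul_le_mul_of_nonneg_left (add_le_add (inv_sq_le _ hv) (inv_sq_le _ hu))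
    (by positivity))
  have hw : 0 < 1 + |ξ| := by positivity
  have hwuv : 1 + |ξ| ≤ (1 + |(m : ℝ)|) + (1 + |ξ - m|) := by linarith
  generalize 1 + |(m : ℝ)| = u at *
  generalize 1 + |ξ - m| = v at *
  generalize 1 + |ξ| = w at *
  have hu0 : 0 < u := by linarith
  have hv0 : 0 < v := by linarith
  have : 2 / w ^ 2 * (1 / v ^ 2 + 1 / u ^ 2) = 2 * (u ^ 2 + v ^ 2) / (w ^ 2 * (u ^ 2 * v ^ 2)) := by
    field_simp
  rw [this, one_div_mul_one_div, div_le_div_iff₀ (by positivity) (by positivity)]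
  have h2 : w ^ 2 ≤ 2 * (u ^ 2 + v ^ 2) := by nlinarith [sq_nonneg (u - v)]
  have h3 : 0 < u ^ 2 * v ^ 2 := by positivity
  nlinarith

lemma continuous_tent (δ : ℝ) : Continuous (tent δ) := by
  have : tent δ = fun y : ℝ => max 0 (δ - ‖(y : UnitAddCircle)‖) / δ ^ 2 := by
    ext y; rw [UnitAddCircle.norm_eq]; rfl
  rw [this]
  have h : Continuous fun y : ℝ => ‖(y : UnitAddCircle)‖ :=
    continuous_norm.comp (AddCircle.continuous_mk' 1)
  fun_prop

lemma continuous_avgF (L : ℕ) (δ : ℝ) : Continuous (avgF L δ) := by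
  unfold avgF
  refine Continuous.div_const (continuous_finsetSum _ fun q _ => ?_) _
  exact (continuous_tent δ).comp (by fun_prop)

lemma hasSum_fourierT_withDensity (ν : Measure ℝ) [IsFiniteMeasure ν] (F : ℝ → ℝ)
    (hF : Continuous F) (hF0 : ∀ x, 0 ≤ F x) (b : ℤ → ℂ) (hb : Summable (fun m => ‖b m‖))
    (hs : ∀ x : ℝ, HasSum (fun m : ℤ => b m * ex (m * x)) (F x : ℂ)) :
    IsFiniteMeasure (ν.withDensity fun x => ENNReal.ofReal (F x)) ∧
    ∀ ξ : ℝ, HasSum (fun m : ℤ => b m * fourierT ν (ξ - m))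
      (fourierT (ν.withDensity fun x => ENNReal.ofReal (F x)) ξ) := by
  have hbd : ∀ x, ‖F x‖ ≤ ∑' m, ‖b m‖ := by
    intro x
    rw [← Complex.norm_real, ← (hs x).tsum_eq]
    refine (norm_tsum_le_tsum_norm ?_).trans_eq ?_
    · simpa [norm_ex] using hb
    · simp [norm_ex]
  have hint : Integrable F ν := Integrable.of_bound hF.aestronglyMeasurable _ (ae_of_all _ hbd)
  refine ⟨isFiniteMeasure_withDensity_ofReal hint.2, fun ξ => ?_⟩
  have e1 : fourierT (ν.withDensity fun x => ENNReal.ofReal (F x)) ξ =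
      ∫ x, ∑' m : ℤ, b m * (ex (-(ξ - m) * x)) ∂ν := by
    rw [fourierT_eq, integral_withDensity_eq_integral_toReal_smul
      (by exact (hF.measurable).ennreal_ofReal) (by simp)]
    congr 1
    ext x
    rw [ENNReal.toReal_ofReal (hF0 x), Complex.real_smul, ← (hs x).tsum_eq, ← tsum_mul_right]
    congr 1
    ext m
    rw [mul_assoc, ← ex_add]
    congr 2
    ring
  rw [e1]
  have e2 : (fun m : ℤ => b m * fourierT ν (ξ - m)) =
      fun m : ℤ => ∫ x, b m * (ex (-(ξ - m) * x)) ∂ν := by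
    funext m
    rw [integral_const_mul, fourierT_eq]
  rw [e2]
  apply hasSum_integral_of_summable_integral_norm
  · intro m
    refine Integrable.of_bound (C := ‖b m‖) ?_ (ae_of_all _ fun x => by simp [norm_ex])
    exact (continuous_const.mul (continuous_ex.comp (by fun_prop))).aestronglyMeasurable
  · simp only [norm_mul, norm_ex, mul_one, integral_const, smul_eq_mul]
    exact hb.mul_left _

lemma exists_L (η : ℝ) (hη : 0 < η) :
    ∃ n : ℕ, 2 ≤ n ∧ (n : ℝ) ≤ η * ((n ^ 4).primesLE.card : ℝ) := by
  obtain ⟨n, hn⟩ := exists_nat_ge (4 / η + 8)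
  have h4 : 0 < 4 / η := by positivity
  have hn8 : (8 : ℝ) ≤ n := by linarith
  have hn8' : 8 ≤ n := by exact_mod_cast hn8
  refine ⟨n, by lia, ?_⟩
  have hpi := Chebyshev.pi_ge (n ^ 4)
  rw [← Nat.primesLE_card_eq_primeCounting] at hpi
  set N : ℝ := ((n ^ 4).primesLE.card : ℝ)
  push_cast at hpi
  have hn1 : (1 : ℝ) < (n : ℝ) ^ 4 := one_lt_pow₀ (by linarith) (by norm_num)
  have hlogpos : 0 < Real.log ((n : ℝ) ^ 4) := Real.log_pos hn1
  rw [div_le_iff₀ hlogpos] at hpi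
  have hlog : Real.log ((n : ℝ) ^ 4) ≤ 2 * n ^ 2 := by
    rw [show (n : ℝ) ^ 4 = ((n : ℝ) ^ 2) ^ 2 by ring, Real.log_pow]
    have := Real.log_le_self (x := (n : ℝ) ^ 2) (by positivity)
    push_cast; linarith
  have hlog' : Real.log ((n : ℝ) ^ 4 + 1) ≤ 4 * n ^ 2 := by
    have : Real.log ((n : ℝ) ^ 4 + 1) ≤ Real.log ((((n : ℝ) ^ 2) * 2) ^ 2) := by
      apply Real.log_le_log (by positivity)
      nlinarith
    rw [Real.log_pow] at this
    have h2 := Real.log_le_self (x := (n : ℝ) ^ 2 * 2) (by positivity)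
    push_cast at this; linarith
  have hl2 := Real.log_two_gt_d9
  have hN0 : 0 ≤ N := by positivity
  have h1 : (n : ℝ) ^ 4 * (1 / 2) - 4 * n ^ 2 ≤ N * (2 * n ^ 2) := by
    have a1 : (n : ℝ) ^ 4 * (1 / 2) ≤ n ^ 4 * Real.log 2 := by gcongr; linarith
    have a2 : N * Real.log ((n : ℝ) ^ 4) ≤ N * (2 * n ^ 2) := by gcongr
    linarith
  have h2 : (n : ℝ) ^ 2 ≤ 4 * N + 8 := by
    have : 0 < (n : ℝ) ^ 2 := by positivity
    by_contra hc
    push Not at hc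
    nlinarith
  have h3 : (n : ℝ) * (4 / η) ≤ 4 * N := by nlinarith
  have h5 : (n : ℝ) * (4 / η) = 4 * (n / η) := by ring
  rw [h5] at h3
  have h6 : (n : ℝ) / η ≤ N := by linarith
  rw [div_le_iff₀ hη] at h6
  linarith

lemma stage (k : ℕ) (ν : Measure ℝ) [IsFiniteMeasure ν] (A : ℝ)
    (hA : ∀ ξ, ‖fourierT ν ξ‖ ≤ A / (1 + |ξ|) ^ 2) (ε : ℝ) (hε : 0 < ε) :
    ∃ ν' : Measure ℝ, IsFiniteMeasure ν' ∧ ν' ≪ ν ∧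
      (∃ K : Set ℝ, IsClosed K ∧
        (∀ x ∈ K, ∃ a b : ℤ, 1 < b ∧ x ≠ a / b ∧ |x - a / b| < 1 / (b : ℝ) ^ k) ∧ ν' Kᶜ = 0) ∧
      (∃ A' : ℝ, ∀ ξ, ‖fourierT ν' ξ‖ ≤ A' / (1 + |ξ|) ^ 2) ∧
      ∀ ξ, ‖fourierT ν' ξ - fourierT ν ξ‖ ≤ ε * (1 + |ξ|) ^ (-(1 / (8 * (k + 2))) : ℝ) := by
  obtain ⟨S, hS, hSum⟩ := exists_sum_bound
  have hA0 : 0 ≤ A := by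
    have := (norm_nonneg _).trans (hA 0)
    simpa using this
  set α : ℝ := 1 / (8 * (k + 2)) with hα
  have hα0 : 0 < α := by positivity
  have hα1 : α ≤ 1 / 2 := by
    rw [hα]; apply one_div_le_one_div_of_le (by norm_num)
    have : (0 : ℝ) ≤ k := by positivity
    linarith
  obtain ⟨n, hn2, hn⟩ := exists_L (ε * α / (12 * (A + 1) * S)) (by positivity)
  set L := n ^ 4 with hL
  have hL2 : 2 ≤ L := hn2.trans (Nat.le_self_pow (by norm_num) n)
  have hN := card_pos_primesLE L hL2
  set δ : ℝ := 1 / (3 * (L : ℝ) ^ (k + 1)) with hδ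
  have hLr : (2 : ℝ) ≤ L := by exact_mod_cast hL2
  have hδ0 : 0 < δ := by positivity
  have hδ6 : δ ≤ 1 / 6 := by
    rw [hδ]; apply one_div_le_one_div_of_le (by norm_num)
    have : (L : ℝ) ≤ L ^ (k + 1) := le_self_pow₀ (by linarith) (by lia)
    linarith
  have hLδ : (L / δ : ℝ) ^ (2 * α) ≤ 3 * n := by
    have e : (L / δ : ℝ) = 3 * (n : ℝ) ^ ((4 * (k + 2) : ℕ) : ℝ) := by
      rw [Real.rpow_natCast, hδ, hL]
      push_cast
      field_simp
      ring
    rw [e, Real.mul_rpow (by norm_num) (by positivity), ← Real.rpow_mul (by positivity)]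
    have e2 : ((4 * (k + 2) : ℕ) : ℝ) * (2 * α) = 1 := by
      rw [hα]; push_cast; field_simp; norm_num
    rw [e2, Real.rpow_one]
    gcongr
    calc (3 : ℝ) ^ (2 * α) ≤ 3 ^ (1 : ℝ) :=
          Real.rpow_le_rpow_of_exponent_le (by norm_num) (by linarith)
      _ = 3 := by simp
  set E : ℝ := 2 / α * (L / δ) ^ (2 * α) / L.primesLE.card with hE
  have hE0 : 0 ≤ E := by positivity
  have hEle : E * A * 2 * S ≤ ε := by
    have hN' : (0 : ℝ) < L.primesLE.card := by exact_mod_cast hN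
    have h1 : E ≤ ε / (2 * (A + 1) * S) := by
      rw [hE, div_le_iff₀ hN']
      calc 2 / α * (L / δ : ℝ) ^ (2 * α) ≤ 2 / α * (3 * (ε * α / (12 * (A + 1) * S) *
            L.primesLE.card)) := by gcongr; exact hLδ.trans (by gcongr)
        _ = _ := by field_simp; norm_num
    calc E * A * 2 * S ≤ ε / (2 * (A + 1) * S) * (A + 1) * 2 * S := by
          gcongr; linarith
      _ = ε := by field_simp
  -- the coefficients
  set B : ℝ := 4 * (L / δ) ^ 2 + 1 with hB
  have hB0 : 0 ≤ B := by positivity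
  have hbB : ∀ m : ℤ, ‖bC L δ m‖ ≤ B * (1 / (1 + |(m : ℝ)|) ^ 2) := by
    intro m
    by_cases hm : m = 0
    · subst hm
      rw [bC_zero L hL2]
      simp only [hB]
      simp
      positivity
    · refine (norm_bC_le L hL2 δ hδ0 m hm).trans ?_
      have hm1 : 1 ≤ |(m : ℝ)| := by exact_mod_cast Int.one_le_abs hm
      rw [div_pow, mul_one_div, div_le_div_iff₀ (by positivity) (by positivity)]
      have h1 : (1 + |(m : ℝ)|) ^ 2 ≤ 4 * |(m : ℝ)| ^ 2 := by nlinarith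
      have h2 : 0 ≤ (L / δ : ℝ) ^ 2 := by positivity
      rw [hB]
      nlinarith [mul_le_mul_of_nonneg_left h1 h2, sq_nonneg |(m : ℝ)|]
  have hbs : Summable (fun m : ℤ => ‖bC L δ m‖) := by
    refine Summable.of_nonneg_of_le (fun m => norm_nonneg _) (fun m => ?_) ((hSum 0).1.mul_left B)
    refine (hbB m).trans ?_
    rw [zero_sub, abs_neg]
    gcongr
    exact inv_sq_le _ (by have := abs_nonneg (m : ℝ); linarith)
  obtain ⟨hfin, hFT⟩ := hasSum_fourierT_withDensity ν (avgF L δ) (continuous_avgF L δ)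
    (avgF_nonneg L δ) (bC L δ) hbs (hasSum_bC L δ hδ0 (by linarith))
  refine ⟨ν.withDensity fun x => ENNReal.ofReal (avgF L δ x), hfin,
    withDensity_absolutelyContinuous _ _, ⟨carrier L δ, isClosed_carrier L δ, ?_, ?_⟩,
    ⟨B * A * 2 * (S + S), ?_⟩, ?_⟩
  · intro x hx
    exact carrier_subset L k x hL2 hx
  · rw [withDensity_apply _ (isClosed_carrier L δ).measurableSet.compl]
    rw [setLIntegral_congr_fun (g := fun _ => 0) (isClosed_carrier L δ).measurableSet.compl]
    · simp
    · intro x hx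
      have : avgF L δ x = 0 := by
        by_contra h
        exact hx (avgF_supp L δ x hδ0 hδ6 h)
      simp [this]
  · intro ξ
    have hg := ((hSum ξ).1.hasSum.add (hSum 0).1.hasSum).mul_left (B * A * (2 / (1 + |ξ|) ^ 2))
    refine ((hFT ξ).norm_le_of_bounded hg ?_).trans ?_
    · intro m
      rw [norm_mul]
      calc ‖bC L δ m‖ * ‖fourierT ν (ξ - m)‖
          ≤ (B * (1 / (1 + |(m : ℝ)|) ^ 2)) * (A / (1 + |ξ - m|) ^ 2) := by
            gcongr
            · exact hbB m
            · exact hA _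
        _ = B * A * (1 / (1 + |(m : ℝ)|) ^ 2 * (1 / (1 + |ξ - m|) ^ 2)) := by ring
        _ ≤ B * A * (2 / (1 + |ξ|) ^ 2 * ((1 + |ξ - m|) ^ (-(3 / 2) : ℝ) +
              (1 + |0 - (m : ℝ)|) ^ (-(3 / 2) : ℝ))) := by
            exact mul_le_mul_of_nonneg_left (conv_two ξ m) (by positivity)
        _ = _ := by ring
    · have h1 := (hSum ξ).2
      have h2 := (hSum 0).2
      calc _ ≤ B * A * (2 / (1 + |ξ|) ^ 2) * (S + S) := by gcongr
        _ = _ := by ring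
  · intro ξ
    have hd := (hFT ξ).sub (hasSum_ite_eq (0 : ℤ) (fourierT ν ξ))
    have hg := (hSum ξ).1.hasSum.mul_left (E * A * (2 * (1 + |ξ|) ^ (-α)))
    refine (hd.norm_le_of_bounded hg ?_).trans ?_
    · intro m
      by_cases hm : m = 0
      · subst hm
        simp only [if_true, bC_zero L hL2, Int.cast_zero, sub_zero, one_mul, sub_self, norm_zero]
        positivity
      · simp only [hm, if_false, sub_zero]
        rw [norm_mul]
        calc ‖bC L δ m‖ * ‖fourierT ν (ξ - m)‖
            ≤ (E * |(m : ℝ)| ^ (-α)) * (A / (1 + |ξ - m|) ^ 2) := by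
              gcongr
              · exact norm_bC_le_rpow L hL2 δ hδ0 m hm α hα0 (by linarith)
              · exact hA _
          _ = E * A * (|(m : ℝ)| ^ (-α) * (1 / (1 + |ξ - m|) ^ 2)) := by ring
          _ ≤ E * A * (2 * (1 + |ξ|) ^ (-α) * (1 + |ξ - m|) ^ (-(3 / 2) : ℝ)) := by
              exact mul_le_mul_of_nonneg_left (conv_one ξ m hm α hα0 hα1) (by positivity)
          _ = _ := by ring
    · have h1 := (hSum ξ).2
      calc _ ≤ E * A * (2 * (1 + |ξ|) ^ (-α)) * S := by gcongr
        _ = (E * A * 2 * S) * (1 + |ξ|) ^ (-α) := by ring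
        _ ≤ _ := by gcongr

lemma fourierT_zero (ν : Measure ℝ) : fourierT ν 0 = ν.real univ := by
  simp [fourierT]

lemma fourierT_eq_charFun (ν : Measure ℝ) (ξ : ℝ) : fourierT ν ξ = charFun ν (-2 * Real.pi * ξ) := by
  rw [charFun_apply_real, fourierT]
  congr 1; ext x; congr 1; push_cast; ring

lemma norm_fourierT_unif (ξ : ℝ) :
    ‖fourierT (volume.restrict (Icc (0 : ℝ) 1)) ξ‖ ≤ 2 / (1 + |ξ|) := by
  have hpos : 0 < 1 + |ξ| := by positivity
  rcases le_total |ξ| 1 with h | h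
  · have h1 : ‖fourierT (volume.restrict (Icc (0 : ℝ) 1)) ξ‖ ≤ 1 := by
      rw [fourierT_eq_charFun]
      refine (norm_charFun_le _).trans ?_
      simp [Measure.real]
    refine h1.trans ?_
    rw [le_div_iff₀ hpos]; linarith
  · have hξ : ξ ≠ 0 := by rintro rfl; simp at h; linarith
    have hpi := Real.pi_gt_three
    set c : ℂ := ((-2 * Real.pi * ξ : ℝ) : ℂ) * Complex.I with hc
    have hcn : ‖c‖ = 2 * Real.pi * |ξ| := by
      rw [hc, norm_mul, Complex.norm_I, mul_one, Complex.norm_real, Real.norm_eq_abs, abs_mul,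
        abs_mul, abs_of_pos Real.pi_pos]
      norm_num
    have hc0 : c ≠ 0 := by
      rw [← norm_pos_iff, hcn]; positivity
    have e : fourierT (volume.restrict (Icc (0 : ℝ) 1)) ξ = ∫ x in (0 : ℝ)..1, Complex.exp (c * x) := by
      rw [intervalIntegral.integral_of_le zero_le_one, fourierT, integral_Icc_eq_integral_Ioc]
      congr 1; ext x; congr 1; rw [hc]; push_cast; ring
    rw [e, integral_exp_mul_complex hc0, norm_div, hcn]
    have hnum : ‖Complex.exp (c * (1 : ℝ)) - Complex.exp (c * (0 : ℝ))‖ ≤ 2 := by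
      refine (norm_sub_le _ _).trans ?_
      have h1 : ‖Complex.exp (c * (1 : ℝ))‖ = 1 := by
        rw [hc, Complex.ofReal_one, mul_one, Complex.norm_exp_ofReal_mul_I]
      have h0 : ‖Complex.exp (c * (0 : ℝ))‖ = 1 := by simp
      rw [h1, h0]; norm_num
    calc _ ≤ 2 / (2 * Real.pi * |ξ|) := by gcongr
      _ ≤ 2 / (1 + |ξ|) := by
        gcongr
        nlinarith

lemma exists_base : ∃ ν : Measure ℝ, IsProbabilityMeasure ν ∧ ν (Icc 0 2)ᶜ = 0 ∧
    ∀ ξ, ‖fourierT ν ξ‖ ≤ 4 / (1 + |ξ|) ^ 2 := by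
  set U : Measure ℝ := volume.restrict (Icc (0 : ℝ) 1) with hU
  have hUp : IsProbabilityMeasure U := ⟨by simp [hU]⟩
  refine ⟨Measure.conv U U, inferInstance, ?_, ?_⟩
  · have hm : MeasurableSet (Icc (0 : ℝ) 2)ᶜ := measurableSet_Icc.compl
    rw [Measure.conv, Measure.map_apply (by fun_prop) hm, hU, Measure.prod_restrict,
      Measure.restrict_apply (hm.preimage (by fun_prop))]
    convert measure_empty
    · ext ⟨x, y⟩
      simp only [mem_inter_iff, mem_preimage, mem_compl_iff, mem_Icc, mem_prod, mem_empty_iff_false,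
        iff_false]
      rintro ⟨h1, ⟨h2, h3⟩, h4, h5⟩
      exact h1 ⟨by linarith, by linarith⟩
    · infer_instance
  · intro ξ
    rw [fourierT_eq_charFun, charFun_conv, ← fourierT_eq_charFun, norm_mul]
    have := norm_fourierT_unif ξ
    calc _ ≤ 2 / (1 + |ξ|) * (2 / (1 + |ξ|)) := by gcongr
      _ = _ := by rw [div_mul_div_comm]; norm_num [sq]

lemma exists_seq (ε : ℕ → ℝ) (hε : ∀ k, 0 < ε k) (ν₀ : Measure ℝ) [IsFiniteMeasure ν₀] (A : ℝ)
    (hA : ∀ ξ, ‖fourierT ν₀ ξ‖ ≤ A / (1 + |ξ|) ^ 2) :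
    ∃ (ν : ℕ → Measure ℝ) (K : ℕ → Set ℝ), ν 0 = ν₀ ∧ (∀ k, IsFiniteMeasure (ν k)) ∧
      (∀ k, ν (k + 1) ≪ ν k) ∧ (∀ k, IsClosed (K k)) ∧
      (∀ k, ∀ x ∈ K k, ∃ a b : ℤ, 1 < b ∧ x ≠ a / b ∧ |x - a / b| < 1 / (b : ℝ) ^ k) ∧
      (∀ k, ν (k + 1) (K k)ᶜ = 0) ∧
      ∀ k ξ, ‖fourierT (ν (k + 1)) ξ - fourierT (ν k) ξ‖ ≤
        ε k * (1 + |ξ|) ^ (-(1 / (8 * (k + 2))) : ℝ) := by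
  let P : Measure ℝ → Prop := fun ν => IsFiniteMeasure ν ∧
    ∃ A : ℝ, ∀ ξ, ‖fourierT ν ξ‖ ≤ A / (1 + |ξ|) ^ 2
  have hstep : ∀ (k : ℕ) (s : {ν // P ν}), ∃ s' : {ν // P ν}, s'.1 ≪ s.1 ∧
      (∃ K : Set ℝ, IsClosed K ∧
        (∀ x ∈ K, ∃ a b : ℤ, 1 < b ∧ x ≠ a / b ∧ |x - a / b| < 1 / (b : ℝ) ^ k) ∧ s'.1 Kᶜ = 0) ∧
      ∀ ξ, ‖fourierT s'.1 ξ - fourierT s.1 ξ‖ ≤ ε k * (1 + |ξ|) ^ (-(1 / (8 * (k + 2))) : ℝ) := by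
    rintro k ⟨ν, hfin, A, hA⟩
    obtain ⟨ν', h1, h2, h3, h4, h5⟩ := stage k ν A hA (ε k) (hε k)
    exact ⟨⟨ν', h1, h4⟩, h2, h3, h5⟩
  choose step hs1 hs2 hs3 using hstep
  let s : ℕ → {ν // P ν} := fun n => Nat.rec ⟨ν₀, inferInstance, A, hA⟩ (fun k s => step k s) n
  choose K hK1 hK2 hK3 using fun k => hs2 k (s k)
  exact ⟨fun k => (s k).1, K, rfl, fun k => (s k).2.1, fun k => hs1 k (s k), hK1, hK2, hK3,
    fun k ξ => hs3 k (s k) ξ⟩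

lemma exists_lower (f : ℝ → ℝ)
    (hdecay : ∀ α > (0 : ℝ), ∀ ε > (0 : ℝ), ∃ M > (0 : ℝ),
      ∀ ξ, M ≤ ξ → ξ ^ (-α) ≤ ε * f ξ) :
    ∃ M : ℝ, 1 ≤ M ∧ (∀ ξ, M ≤ ξ → 1 / ξ ≤ f ξ) ∧
      ∀ α > (0 : ℝ), ∃ c > (0 : ℝ), ∀ ξ, M ≤ ξ → c * ξ ^ (-α) ≤ f ξ := by
  obtain ⟨M₁, hM₁, h1⟩ := hdecay 1 one_pos 1 one_pos
  have hf1 : ∀ ξ, max M₁ 1 ≤ ξ → 1 / ξ ≤ f ξ := by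
    intro ξ hξ
    have := h1 ξ ((le_max_left _ _).trans hξ)
    rw [Real.rpow_neg_one, one_mul] at this
    rwa [one_div]
  refine ⟨max M₁ 1, le_max_right _ _, hf1, fun α hα => ?_⟩
  obtain ⟨M₂, hM₂, h2⟩ := hdecay α hα 1 one_pos
  have hR : 0 < max M₂ 1 := by positivity
  refine ⟨1 / max M₂ 1, by positivity, fun ξ hξ => ?_⟩
  have hξ1 : 1 ≤ ξ := (le_max_right _ _).trans hξ
  have hp : 0 < ξ ^ (-α) := by positivity
  have hc1 : 1 / max M₂ 1 ≤ 1 := by rw [div_le_one hR]; exact le_max_right _ _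
  rcases le_total M₂ ξ with h | h
  · have := h2 ξ h
    nlinarith
  · refine le_trans ?_ (hf1 ξ hξ)
    have h3 : ξ ^ (-α) ≤ 1 := Real.rpow_le_one_of_one_le_of_nonpos hξ1 (by linarith)
    calc 1 / max M₂ 1 * ξ ^ (-α) ≤ 1 / max M₂ 1 * 1 := by gcongr
      _ ≤ 1 / ξ := by
        rw [mul_one]
        exact one_div_le_one_div_of_le (by linarith) (h.trans (le_max_left _ _))

lemma fourierT_smul (c : ENNReal) (ν : Measure ℝ) (ξ : ℝ) :
    ‖fourierT (c • ν) ξ‖ = c.toReal * ‖fourierT ν ξ‖ := by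
  unfold fourierT
  rw [integral_smul_measure, norm_smul, Real.norm_of_nonneg ENNReal.toReal_nonneg]

lemma tendsto_fourierT {ι : Type*} {l : Filter ι} {P : ι → ProbabilityMeasure ℝ}
    {μ : ProbabilityMeasure ℝ} (h : Tendsto P l (nhds μ)) (ξ : ℝ) :
    Tendsto (fun i => fourierT (P i) ξ) l (nhds (fourierT μ ξ)) := by
  rw [ProbabilityMeasure.tendsto_iff_forall_integral_rclike_tendsto ℂ] at h
  have := h (BoundedContinuousFunction.ofNormedAddCommGroup (fun x : ℝ => ex (-ξ * x))
    (continuous_ex.comp (by fun_prop)) 1 (fun x => (norm_ex _).le))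
  simp_rw [fourierT_eq]
  exact this

theorem stmt0 (f : ℝ → ℝ)
    (hf_nonneg : ∀ ξ, 0 ≤ ξ → 0 ≤ f ξ)
    (hf_bdd : ∃ B : ℝ, ∀ ξ, 0 ≤ ξ → f ξ ≤ B)
    (hf_reg : AntitoneOn f (Ici 0) ∨ ContinuousOn f (Ici 0))
    (hdecay : ∀ α > (0 : ℝ), ∀ ε > (0 : ℝ), ∃ M > (0 : ℝ),
      ∀ ξ, M ≤ ξ → ξ ^ (-α) ≤ ε * f ξ) :
    ∃ μ : Measure ℝ, IsProbabilityMeasure μ ∧ μ {x : ℝ | Liouville x}ᶜ = 0 ∧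
      ∃ C > (0 : ℝ), ∃ M' > (0 : ℝ),
        ∀ ξ : ℝ, M' ≤ |ξ| → ‖fourierT μ ξ‖ ≤ C * f |ξ| := by
  obtain ⟨M, hM1, hfM, hlow⟩ := exists_lower f hdecay
  have hlow' : ∀ k : ℕ, ∃ c > (0 : ℝ), ∀ ξ, M ≤ ξ → c * ξ ^ (-(1 / (8 * (k + 2))) : ℝ) ≤ f ξ :=
    fun k => hlow (1 / (8 * (k + 2))) (by positivity)
  choose c hc0 hc using hlow'
  obtain ⟨ν₀, hν₀, hν₀K, hν₀A⟩ := exists_base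
  set ε : ℕ → ℝ := fun k => (1 / 2) ^ (k + 2) * min 1 (c k) with hε
  have hε0 : ∀ k, 0 < ε k := fun k => by
    have := hc0 k
    positivity
  obtain ⟨ν, K, h0, hfin, hac, hKc, hKL, hKν, hdiff⟩ := exists_seq ε hε0 ν₀ 4 hν₀A
  -- summing the differences
  have hsum : ∀ (ξ g : ℝ), (∀ k : ℕ, ε k * (1 + |ξ|) ^ (-(1 / (8 * (k + 2))) : ℝ) ≤
      (1 / 2) ^ (k + 2) * g) →
      ∀ j, ‖fourierT (ν j) ξ - fourierT ν₀ ξ‖ ≤ (1 / 2 - (1 / 2) ^ (j + 1)) * g := by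
    intro ξ g hg j
    induction j with
    | zero => simp [h0]
    | succ j ih =>
      have h1 := (hdiff j ξ).trans (hg j)
      have h2 := norm_add_le (fourierT (ν (j + 1)) ξ - fourierT (ν j) ξ)
        (fourierT (ν j) ξ - fourierT ν₀ ξ)
      rw [sub_add_sub_cancel] at h2
      refine h2.trans ((add_le_add h1 ih).trans (le_of_eq ?_))
      ring
  have hmass : ∀ j, 1 / 2 ≤ (ν j).real univ := by
    intro j
    have h1 := hsum 0 1 (fun k => by
      simp only [hε, abs_zero, add_zero, Real.one_rpow, mul_one]
      have : min 1 (c k) ≤ 1 := min_le_left _ _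
      have h2 : (0 : ℝ) < (1 / 2) ^ (k + 2) := by positivity
      nlinarith) j
    have e : ν₀.real univ = 1 := probReal_univ
    rw [fourierT_zero, fourierT_zero, ← Complex.ofReal_sub, Complex.norm_real, e,
      Real.norm_eq_abs, abs_le] at h1
    have h2 : (0 : ℝ) < (1 / 2) ^ (j + 1) := by positivity
    linarith [h1.1]
  have hdec : ∀ j ξ, M ≤ |ξ| → ‖fourierT (ν j) ξ‖ ≤ 5 * f |ξ| := by
    intro j ξ hξ
    have hξ1 : 1 ≤ |ξ| := hM1.trans hξ
    have hf1 := hfM _ hξ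
    have hfpos : 0 < f |ξ| := lt_of_lt_of_le (by positivity) hf1
    have h1 := hsum ξ (f |ξ|) (fun k => by
      simp only [hε]
      rw [mul_assoc]
      gcongr
      refine le_trans ?_ (hc k _ hξ)
      have := hc0 k
      exact mul_le_mul (min_le_right _ _) (Real.rpow_le_rpow_of_nonpos (by positivity)
        (by linarith) (by rw [neg_nonpos]; positivity)) (by positivity) this.le) j
    have h2 : (0 : ℝ) < (1 / 2) ^ (j + 1) := by positivity
    have h3 : ‖fourierT ν₀ ξ‖ ≤ 4 * f |ξ| := by
      refine (hν₀A ξ).trans (le_trans ?_ (mul_le_mul_of_nonneg_left hf1 (by norm_num)))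
      rw [mul_one_div]
      gcongr
      nlinarith
    have h4 := norm_add_le (fourierT (ν j) ξ - fourierT ν₀ ξ) (fourierT ν₀ ξ)
    rw [sub_add_cancel] at h4
    nlinarith
  have hacs : ∀ i j, i ≤ j → ν j ≪ ν i := by
    intro i j hij
    induction j, hij using Nat.le_induction with
    | base => exact Measure.AbsolutelyContinuous.rfl
    | succ j _ ih => exact (hac j).trans ih
  -- normalise
  have hne : ∀ j, ν j univ ≠ 0 := by
    intro j h
    have := hmass j
    rw [Measure.real, h] at this
    norm_num at this
  have hprob : ∀ j, IsProbabilityMeasure ((ν j univ)⁻¹ • ν j) := fun j => by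
    have := hfin j
    exact ⟨by simp [ENNReal.inv_mul_cancel (hne j) (measure_ne_top _ _)]⟩
  set P : ℕ → ProbabilityMeasure ℝ := fun j => ⟨(ν j univ)⁻¹ • ν j, hprob j⟩ with hP
  have hnull : ∀ j (s : Set ℝ), ν j s = 0 → (P j : Measure ℝ) s = 0 := by
    intro j s hs
    simp [hP, hs]
  have hPdec : ∀ j ξ, M ≤ |ξ| → ‖fourierT (P j) ξ‖ ≤ 10 * f |ξ| := by
    intro j ξ hξ
    have h1 := hdec j ξ hξ
    have h2 : ‖fourierT (P j) ξ‖ = ((ν j univ)⁻¹).toReal * ‖fourierT (ν j) ξ‖ :=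
      fourierT_smul _ _ _
    rw [h2, ENNReal.toReal_inv]
    have h3 := hmass j
    rw [Measure.real] at h3
    have h4 : (ν j univ).toReal⁻¹ ≤ 2 := by
      rw [inv_le_comm₀ (by linarith) (by norm_num)]; linarith
    calc _ ≤ 2 * (5 * f |ξ|) := by gcongr
      _ = _ := by ring
  -- compactness
  have hcpt := isCompact_setOfPred_probabilityMeasure_mass_eq_compl_isCompact_le (E := ℝ)
    (u := fun _ => 0) (K := fun _ => Icc (0 : ℝ) 2) tendsto_const_nhds (fun _ => isCompact_Icc)
    (Or.inr monotone_const)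
  have hmem : ∀ j, P j ∈ {μ : ProbabilityMeasure ℝ | ∀ n : ℕ, μ (Icc (0 : ℝ) 2)ᶜ ≤ 0} := by
    intro j n
    have h1 : ν j (Icc (0 : ℝ) 2)ᶜ = 0 := by
      apply hacs 0 j (Nat.zero_le _)
      rw [h0]; exact hν₀K
    have h2 := hnull j _ h1
    show ((P j : Measure ℝ) (Icc (0 : ℝ) 2)ᶜ).toNNReal ≤ 0
    rw [h2]
    simp
  obtain ⟨μ, -, hμ⟩ := hcpt.ultrafilter_le_nhds ((Ultrafilter.of (atTop : Filter ℕ)).map P)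
    (by
      rw [le_principal_iff, Ultrafilter.mem_coe, Ultrafilter.mem_map]
      exact Filter.univ_mem' hmem)
  have hlim : Tendsto P (Ultrafilter.of (atTop : Filter ℕ) : Filter ℕ) (nhds μ) := hμ
  refine ⟨μ, inferInstance, ?_, 10, by norm_num, M, by linarith, ?_⟩
  · have hk : ∀ k, (μ : Measure ℝ) (K k)ᶜ = 0 := by
      intro k
      have h1 := ProbabilityMeasure.le_liminf_measure_open_of_tendsto hlim (hKc k).isOpen_compl
      have h2 : ∀ᶠ j in (Ultrafilter.of (atTop : Filter ℕ) : Filter ℕ),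
          (P j : Measure ℝ) (K k)ᶜ = 0 := by
        apply Ultrafilter.of_le (atTop : Filter ℕ)
        filter_upwards [eventually_ge_atTop (k + 1)] with j hj
        exact hnull j _ (hacs _ _ hj (hKν k))
      rw [liminf_congr h2, liminf_const] at h1
      exact nonpos_iff_eq_zero.1 h1
    refine measure_mono_null ?_ (measure_iUnion_null hk)
    intro x hx
    by_contra hcon
    simp only [mem_iUnion, mem_compl_iff, not_exists, not_not] at hcon
    exact hx (fun n => hKL n x (hcon n))
  · intro ξ hξ
    exact le_of_tendsto (tendsto_fourierT hlim ξ).norm (Eventually.of_forall fun j => hPdec j ξ hξ)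
end

section
/- Let f : [0,∞) → [0,∞) be a bounded function that is either antitone or continuous. Suppose there exist α₀ > 0, c > 0 and M > 0 such that c·f(ξ) ≤ ξ^(−α₀) for all ξ ≥ M (i.e. liminf_{ξ→+∞} ξ^(−α₀)/f(ξ) > 0 for some α₀ > 0). Then there is no Borel probability measure μ on ℝ with μ(ℝ \ 𝕃) = 0 for which there exist C > 0, M' > 0 with |μ̂(ξ)| ≤ C·f(|ξ|) for all |ξ| ≥ M'. -/
open MeasureTheory Filter Set

/-- The character `x ↦ e^(−2πitx)`. -/
noncomputable def chr (t x : ℝ) : ℂ :=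
  Complex.exp (((-2 * Real.pi * t * x : ℝ) : ℂ) * Complex.I)

/-- Exponential sum. -/
noncomputable def expS (N : ℕ) (L x : ℝ) : ℂ := ∑ j ∈ Finset.range N, chr (j * L) x

lemma chr_cont (t : ℝ) : Continuous (chr t) := by
  unfold chr; fun_prop

lemma chr_norm (t x : ℝ) : ‖chr t x‖ = 1 := by
  unfold chr; exact Complex.norm_exp_ofReal_mul_I _

lemma chr_int (μ : Measure ℝ) [IsProbabilityMeasure μ] (t : ℝ) : Integrable (chr t) μ := by
  refine Integrable.of_bound (chr_cont t).aestronglyMeasurable 1 ?_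
  exact Eventually.of_forall fun x => (chr_norm t x).le

lemma expS_cont (N : ℕ) (L : ℝ) : Continuous (expS N L) := by
  unfold expS
  exact continuous_finsetSum _ fun j _ => chr_cont _

lemma chr_mul_conj (s t x : ℝ) : chr s x * (starRingEnd ℂ) (chr t x) = chr (s - t) x := by
  unfold chr
  rw [← Complex.exp_conj, ← Complex.exp_add]
  congr 1
  simp only [map_mul, Complex.conj_ofReal, Complex.conj_I]
  push_cast
  ring

lemma expS_sq (N : ℕ) (L x : ℝ) : ((‖expS N L x‖ ^ 2 : ℝ) : ℂ) =
    ∑ j ∈ Finset.range N, ∑ k ∈ Finset.range N, chr (j * L - k * L) x := by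
  have : ((‖expS N L x‖ ^ 2 : ℝ) : ℂ) = expS N L x * (starRingEnd ℂ) (expS N L x) := by
    rw [Complex.mul_conj, Complex.normSq_eq_norm_sq]
  rw [this]
  unfold expS
  rw [map_sum, Finset.sum_mul_sum]
  simp only [chr_mul_conj]

lemma expS_norm_le (N : ℕ) (L x : ℝ) : ‖expS N L x‖ ≤ N := by
  unfold expS
  refine (norm_sum_le _ _).trans ?_
  simp [chr_norm]

lemma fT_le_one (μ : Measure ℝ) [IsProbabilityMeasure μ] (t : ℝ) : ‖fourierT μ t‖ ≤ 1 := by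
  have := norm_integral_le_of_norm_le_const (μ := μ) (f := chr t) (C := 1)
    (Eventually.of_forall fun x => (chr_norm t x).le)
  simpa [fourierT, chr] using this

lemma int_le (μ : Measure ℝ) [IsProbabilityMeasure μ] (N : ℕ) (L B : ℝ) (hL : 0 < L)
    (hB : 0 ≤ B) (h : ∀ ξ : ℝ, L ≤ |ξ| → ‖fourierT μ ξ‖ ≤ B) :
    ∫ x, ‖expS N L x‖ ^ 2 ∂μ ≤ N + N ^ 2 * B := by
  have h1 : ((∫ x, ‖expS N L x‖ ^ 2 ∂μ : ℝ) : ℂ) =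
      ∑ j ∈ Finset.range N, ∑ k ∈ Finset.range N, fourierT μ (j * L - k * L) := by
    rw [← integral_complex_ofReal]
    simp only [expS_sq]
    rw [integral_finsetSum _ fun j _ => integrable_finsetSum _ fun k _ => chr_int μ _]
    refine Finset.sum_congr rfl fun j _ => ?_
    rw [integral_finsetSum _ fun k _ => chr_int μ _]
    rfl
  have h0 : 0 ≤ ∫ x, ‖expS N L x‖ ^ 2 ∂μ := integral_nonneg fun x => by positivity
  have h2 : ∫ x, ‖expS N L x‖ ^ 2 ∂μ = ‖((∫ x, ‖expS N L x‖ ^ 2 ∂μ : ℝ) : ℂ)‖ := by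
    rw [Complex.norm_real, Real.norm_of_nonneg h0]
  rw [h2, h1]
  have h3 : ∀ j ∈ Finset.range N, ∀ k ∈ Finset.range N,
      ‖fourierT μ (j * L - k * L)‖ ≤ (if j = k then 1 else 0) + B := by
    intro j _ k _
    split_ifs with hjk
    · linarith [fT_le_one μ (j * L - k * L)]
    · rw [zero_add]
      apply h
      rw [← sub_mul, abs_mul, abs_of_pos hL]
      have : (1 : ℝ) ≤ |(j : ℝ) - k| := by
        have : (1 : ℤ) ≤ |(j : ℤ) - k| := Int.one_le_abs (by omega)
        exact_mod_cast this
      nlinarith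
  refine (norm_sum_le _ _).trans ?_
  refine (Finset.sum_le_sum fun j hj => (norm_sum_le _ _).trans
    (Finset.sum_le_sum (h3 j hj))).trans ?_
  simp only [Finset.sum_add_distrib, Finset.sum_ite_eq, Finset.sum_const, Finset.card_range,
    nsmul_eq_mul]
  rw [Finset.sum_congr rfl (g := fun _ => (1 : ℝ)) fun j hj => if_pos hj]
  simp only [Finset.sum_const, Finset.card_range, nsmul_eq_mul]
  apply le_of_eq; ring

lemma chr_re (t x : ℝ) (p : ℤ) (h : |t * x - p| ≤ 1 / 8) : 1 / 2 ≤ (chr t x).re := by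
  unfold chr
  rw [Complex.exp_ofReal_mul_I_re]
  have : -2 * Real.pi * t * x = -(2 * Real.pi * (t * x - p)) - p * (2 * Real.pi) := by ring
  rw [this, Real.cos_sub_int_mul_two_pi, Real.cos_neg]
  refine le_trans ?_ (Real.one_sub_sq_div_two_le_cos)
  have hp : 2 * Real.pi * |t * x - p| ≤ 1 := by
    have := Real.pi_lt_four
    have := Real.pi_pos
    have := abs_nonneg (t * x - p)
    nlinarith
  have : (2 * Real.pi * (t * x - p)) ^ 2 = (2 * Real.pi * |t * x - p|) ^ 2 := by
    rw [mul_pow, mul_pow _ |t * x - p|, sq_abs]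
  rw [this]
  have h0 : 0 ≤ 2 * Real.pi * |t * x - p| := by positivity
  nlinarith

lemma expS_ge (N : ℕ) (L x : ℝ) (h : ∀ j < N, ∃ p : ℤ, |(j * L) * x - p| ≤ 1 / 8) :
    (N : ℝ) / 2 ≤ ‖expS N L x‖ := by
  refine le_trans ?_ (Complex.re_le_norm _)
  unfold expS
  rw [Complex.re_sum]
  have : (N : ℝ) / 2 = ∑ j ∈ Finset.range N, (1 / 2 : ℝ) := by simp; ring
  rw [this]
  refine Finset.sum_le_sum fun j hj => ?_
  obtain ⟨p, hp⟩ := h j (Finset.mem_range.1 hj)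
  exact chr_re _ _ p hp

lemma meas_le (μ : Measure ℝ) [IsProbabilityMeasure μ] (N : ℕ) (hN : 0 < N) (L B : ℝ) (hL : 0 < L)
    (hB : 0 ≤ B) (h : ∀ ξ : ℝ, L ≤ |ξ| → ‖fourierT μ ξ‖ ≤ B) :
    μ {x | (N : ℝ) / 2 ≤ ‖expS N L x‖} ≤ ENNReal.ofReal (4 * (1 / N + B)) := by
  have hintg : Integrable (fun x => ‖expS N L x‖ ^ 2) μ := by
    refine Integrable.of_bound ((expS_cont N L).norm.pow 2).aestronglyMeasurable ((N : ℝ) ^ 2) ?_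
    refine Eventually.of_forall fun x => ?_
    rw [Real.norm_of_nonneg (by positivity)]
    have := expS_norm_le N L x
    gcongr
  have hm := mul_meas_ge_le_integral_of_nonneg (μ := μ)
    (Eventually.of_forall fun x => by positivity) hintg (((N : ℝ) / 2) ^ 2)
  have hi := int_le μ N L B hL hB h
  have hN' : (0 : ℝ) < N := by exact_mod_cast hN
  have hset : {x | (N : ℝ) / 2 ≤ ‖expS N L x‖} ⊆
      {x | ((N : ℝ) / 2) ^ 2 ≤ ‖expS N L x‖ ^ 2} := by
    intro x hx
    simp only [mem_setOf_eq] at hx ⊢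
    gcongr
  refine (measure_mono hset).trans ?_
  rw [← ofReal_measureReal]
  apply ENNReal.ofReal_le_ofReal
  have h5 := hm.trans hi
  have : 4 * (1 / (N : ℝ) + B) = (N + N ^ 2 * B) / (((N : ℝ) / 2) ^ 2) := by
    field_simp; norm_num
  rw [this, le_div_iff₀ (by positivity), mul_comm]
  exact h5

lemma liou_mem (m q : ℕ) (hq : 2 ≤ q) (x : ℝ) (p : ℤ)
    (h : |x - p / q| < 1 / (q : ℝ) ^ (m + 6)) :
    ((q ^ 2 : ℕ) : ℝ) / 2 ≤ ‖expS (q ^ 2) ((q : ℝ) ^ (m + 1)) x‖ := by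
  apply expS_ge
  intro j hj
  refine ⟨j * q ^ m * p, ?_⟩
  have hq' : (2 : ℝ) ≤ q := by exact_mod_cast hq
  have hq0 : (0 : ℝ) < q := by linarith
  have e : (j * (q : ℝ) ^ (m + 1)) * x - ((j * q ^ m * p : ℤ) : ℝ) =
      j * (q : ℝ) ^ (m + 1) * (x - p / q) := by
    push_cast
    field_simp
    ring
  rw [e, abs_mul, abs_of_nonneg (by positivity)]
  have hj' : (j : ℝ) ≤ (q : ℝ) ^ 2 := by exact_mod_cast hj.le
  calc _ ≤ (q : ℝ) ^ 2 * (q : ℝ) ^ (m + 1) * (1 / (q : ℝ) ^ (m + 6)) := by gcongr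
    _ = 1 / (q : ℝ) ^ 3 := by field_simp; ring
    _ ≤ 1 / 8 := by
      have : (2 : ℝ) ^ 3 ≤ (q : ℝ) ^ 3 := by gcongr
      apply one_div_le_one_div_of_le <;> linarith

lemma liou_null (μ : Measure ℝ) [IsProbabilityMeasure μ] (α K M : ℝ) (hα : 0 < α) (hK : 0 ≤ K)
    (h : ∀ ξ : ℝ, M ≤ |ξ| → ‖fourierT μ ξ‖ ≤ K * |ξ| ^ (-α)) : μ {x : ℝ | Liouville x} = 0 := by
  obtain ⟨m, hm⟩ := exists_nat_ge (2 / α)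
  obtain ⟨Q, hQ⟩ := exists_nat_ge M
  let A : ℕ → Set ℝ := fun q => if 2 ≤ q ∧ Q ≤ q then
    {x | ((q ^ 2 : ℕ) : ℝ) / 2 ≤ ‖expS (q ^ 2) ((q : ℝ) ^ (m + 1)) x‖} else ∅
  have hA : ∀ q, μ (A q) ≤ ENNReal.ofReal (4 * (1 + K) * (1 / (q : ℝ) ^ 2)) := by
    intro q
    by_cases hq : 2 ≤ q ∧ Q ≤ q
    · simp only [A, if_pos hq]
      have hq1 : (1 : ℝ) ≤ q := by exact_mod_cast (by omega : 1 ≤ q)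
      have hq0 : (0 : ℝ) < q := by linarith
      have hle : (q : ℝ) ≤ (q : ℝ) ^ (m + 1) := le_self_pow₀ hq1 (by omega)
      refine (meas_le μ (q ^ 2) (by have := hq.1; positivity) _ (K * (1 / (q : ℝ) ^ 2))
        (by positivity) (by positivity) ?_).trans (le_of_eq ?_)
      · intro ξ hξ
        have hQq : (Q : ℝ) ≤ q := by exact_mod_cast hq.2
        refine (h ξ (by linarith)).trans ?_
        gcongr
        calc |ξ| ^ (-α) ≤ ((q : ℝ) ^ (m + 1)) ^ (-α) :=
              Real.rpow_le_rpow_of_nonpos (by positivity) hξ (by linarith)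
          _ = (q : ℝ) ^ (((m + 1 : ℕ) : ℝ) * (-α)) := by
              rw [Real.rpow_mul hq0.le, Real.rpow_natCast]
          _ ≤ (q : ℝ) ^ (-(2 : ℝ)) := by
              apply Real.rpow_le_rpow_of_exponent_le hq1
              rw [div_le_iff₀ hα] at hm
              push_cast
              nlinarith
          _ = 1 / (q : ℝ) ^ 2 := by
              rw [Real.rpow_neg hq0.le, one_div]
              norm_cast
      · congr 1
        push_cast
        ring
    · simp only [A, if_neg hq]; simp
  have hsum : ∑' q, μ (A q) ≠ ⊤ := by
    refine ne_top_of_le_ne_top ?_ (ENNReal.tsum_le_tsum hA)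
    have : Summable fun q : ℕ => 4 * (1 + K) * (1 / (q : ℝ) ^ 2) :=
      (Real.summable_one_div_nat_pow.2 (by norm_num)).mul_left _
    exact this.tsum_ofReal_ne_top
  have hz := measure_limsup_atTop_eq_zero hsum
  refine measure_mono_null ?_ hz
  intro x hx
  rw [mem_limsup_iff_frequently_mem]
  have hf := Liouville.frequently_exists_num hx (m + 6)
  refine (hf.and_eventually ((eventually_ge_atTop 2).and (eventually_ge_atTop Q))).mono ?_
  rintro q ⟨⟨p, _, hp⟩, hq⟩
  simp only [A, if_pos hq]
  exact liou_mem m q hq.1 x p hp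

theorem stmt1 (f : ℝ → ℝ)
    (hf_nonneg : ∀ ξ, 0 ≤ ξ → 0 ≤ f ξ)
    (hf_bdd : ∃ B : ℝ, ∀ ξ, 0 ≤ ξ → f ξ ≤ B)
    (hf_reg : AntitoneOn f (Ici 0) ∨ ContinuousOn f (Ici 0))
    (hdecay : ∃ α₀ > (0 : ℝ), ∃ c > (0 : ℝ), ∃ M > (0 : ℝ),
      ∀ ξ, M ≤ ξ → c * f ξ ≤ ξ ^ (-α₀)) :
    ¬ ∃ μ : Measure ℝ, IsProbabilityMeasure μ ∧ μ {x : ℝ | Liouville x}ᶜ = 0 ∧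
      ∃ C > (0 : ℝ), ∃ M' > (0 : ℝ),
        ∀ ξ : ℝ, M' ≤ |ξ| → ‖fourierT μ ξ‖ ≤ C * f |ξ| := by
  rintro ⟨μ, hμ, hL, C, hC, M', hM', hb⟩
  obtain ⟨α, hα, c, hc, M, hM, hd⟩ := hdecay
  have h0 : μ {x : ℝ | Liouville x} = 0 := by
    refine liou_null μ α (C / c) (max M M') hα (by positivity) fun ξ hξ => ?_
    refine (hb ξ ((le_max_right _ _).trans hξ)).trans ?_
    have := hd |ξ| ((le_max_left _ _).trans hξ)
    rw [div_mul_eq_mul_div, le_div_iff₀ hc]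
    nlinarith
  have h1 : μ univ ≤ 0 := by
    rw [← union_compl_self {x : ℝ | Liouville x}]
    exact (measure_union_le _ _).trans (by rw [h0, hL, add_zero])
  simp at h1
end

section
/- Let f : [0,∞) → [0,∞) be a bounded function that is either antitone or continuous, and suppose that for every α > 0 and every ε > 0 there exists M > 0 such that ξ^(−α) ≤ ε·f(ξ) for all ξ ≥ M. Then for every natural number n ≥ 1 the power f^n again satisfies this condition, and consequently there exist a Borel probability measure μₙ on ℝ with μₙ(ℝ \ 𝕃) = 0 and constants C > 0, M' > 0 such that |μ̂ₙ(ξ)| ≤ C·f(|ξ|)^n for all |ξ| ≥ M'. -/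
open MeasureTheory Filter Set

/-- The primes in `(N, N ^ 3]`. -/
def primesQ (N : ℕ) : Finset ℕ := (Finset.Ioc N (N ^ 3)).filter Nat.Prime

lemma card_primesQ {N : ℕ} (hN : 12 ≤ N) : N ≤ (primesQ N).card := by
  have h1 := Chebyshev.pi_ge (N ^ 3)
  have hNr : (12 : ℝ) ≤ N := by exact_mod_cast hN
  have hl : Real.log N ≤ N := (Real.log_le_sub_one_of_pos (by linarith)).trans (by linarith)
  have hlpos : 0 < Real.log N := Real.log_pos (by linarith)
  have hl2 : Real.log ((N : ℝ) ^ 3 + 1) ≤ 1 + 3 * N := by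
    have : Real.log ((N : ℝ) ^ 3 + 1) ≤ Real.log (2 * (N : ℝ) ^ 3) := by
      apply Real.log_le_log (by positivity)
      have : (1 : ℝ) ≤ (N : ℝ) ^ 3 := one_le_pow₀ (by linarith)
      linarith
    rw [Real.log_mul (by norm_num) (by positivity), Real.log_pow] at this
    have := Real.log_two_lt_d9
    push_cast at *
    linarith
  push_cast at h1
  rw [Real.log_pow, div_le_iff₀ (by push_cast; positivity)] at h1
  have h2 : 2 * (N : ℝ) ≤ (Nat.primeCounting (N ^ 3) : ℝ) := by
    by_contra! hc
    have h3 : (Nat.primeCounting (N ^ 3) : ℝ) * (((3 : ℕ) : ℝ) * Real.log N) ≤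
        (2 * N) * (3 * N) := by
      push_cast
      gcongr
    have h4 := Real.log_two_gt_d9
    have h5 : (N : ℝ) ^ 3 * 0.6931471803 ≤ N ^ 3 * Real.log 2 := by gcongr
    have h6 : 12 * (N : ℝ) ^ 2 ≤ N ^ 3 := by nlinarith [sq_nonneg (N : ℝ)]
    nlinarith
  have h2' : 2 * N ≤ Nat.primeCounting (N ^ 3) := by exact_mod_cast h2
  have h3 : (Nat.primesLE (N ^ 3)) ⊆ primesQ N ∪ Finset.Ioc 0 N := by
    intro p hp
    rw [Nat.mem_primesLE] at hp
    have := hp.2.pos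
    simp only [primesQ, Finset.mem_union, Finset.mem_filter, Finset.mem_Ioc]
    by_cases h : p ≤ N
    · right; omega
    · left; exact ⟨⟨by omega, hp.1⟩, hp.2⟩
  have h4 := (Finset.card_le_card h3).trans (Finset.card_union_le _ _)
  have h5 : (Nat.primesLE (N ^ 3)).card = Nat.primeCounting (N ^ 3) := by
    simp
  simp only [Nat.card_Ioc] at h4
  omega

lemma geom_bound (ξ : ℝ) (q A : ℕ) (hq : 0 < q) (T : ℝ) (hT : 0 < T)
    (h : ∀ m : ℤ, T ≤ |ξ - m * q|) :
    ‖∑ a ∈ Finset.range A, Complex.exp (((-2 * Real.pi * ξ * (((a + 1 : ℕ) : ℝ) / q) : ℝ) : ℂ)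
      * Complex.I)‖ ≤ q / (2 * T) := by
  have hqr : (0 : ℝ) < q := by exact_mod_cast hq
  set θ : ℝ := ξ / q with hθ
  set z : ℂ := Complex.exp (Complex.I * ((-2 * Real.pi * θ : ℝ) : ℂ)) with hz
  have hz1 : ‖z‖ = 1 := by
    rw [hz, mul_comm]; exact Complex.norm_exp_ofReal_mul_I _
  have hterm : ∀ a : ℕ, Complex.exp (((-2 * Real.pi * ξ * (((a + 1 : ℕ) : ℝ) / q) : ℝ) : ℂ)
      * Complex.I) = z * z ^ a := by
    intro a
    rw [← pow_succ', hz, ← Complex.exp_nat_mul]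
    congr 1
    rw [hθ]
    push_cast
    ring
  have hlow : 4 * T / q ≤ ‖z - 1‖ := by
    rw [hz, Complex.norm_exp_I_mul_ofReal_sub_one, Real.norm_eq_abs, abs_mul,
      abs_of_pos (by norm_num : (0 : ℝ) < 2)]
    have e1 : -2 * Real.pi * θ / 2 = -(Real.pi * (θ - round θ) + (round θ : ℤ) * Real.pi) := by ring
    rw [e1, Real.sin_neg, abs_neg, Real.sin_add_int_mul_pi, abs_mul, abs_zpow, abs_neg, abs_one,
      one_zpow, one_mul]
    have h1 : |θ - round θ| ≤ 1 / 2 := abs_sub_round θ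
    have h2 : |Real.pi * (θ - round θ)| ≤ Real.pi / 2 := by
      rw [abs_mul, abs_of_pos Real.pi_pos]
      nlinarith [Real.pi_pos]
    have h3 := Real.mul_abs_le_abs_sin h2
    rw [abs_mul, abs_of_pos Real.pi_pos] at h3
    have h4 : 2 / Real.pi * (Real.pi * |θ - round θ|) = 2 * |θ - round θ| := by
      field_simp
    rw [h4] at h3
    have h5 : T / q ≤ |θ - round θ| := by
      rw [div_le_iff₀ hqr, ← abs_of_pos hqr, ← abs_mul]
      refine (h (round θ)).trans (le_of_eq ?_)
      rw [sub_mul, hθ, div_mul_cancel₀ _ hqr.ne']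
    have : 4 * T / q = 4 * (T / q) := by ring
    rw [this]
    linarith
  have hpos : 0 < 4 * T / q := by positivity
  have hz0 : z ≠ 1 := by
    intro hh
    rw [hh] at hlow
    simp at hlow
    linarith
  simp_rw [hterm]
  rw [← Finset.mul_sum, norm_mul, hz1, one_mul, geom_sum_eq hz0, norm_div]
  have hnum : ‖z ^ A - 1‖ ≤ 2 := by
    refine (norm_sub_le _ _).trans ?_
    rw [norm_pow, hz1]; norm_num
  calc ‖z ^ A - 1‖ / ‖z - 1‖ ≤ 2 / (4 * T / q) := by gcongr
    _ = q / (2 * T) := by field_simp; norm_num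

lemma card_dvd_le {N j : ℕ} (hN : 2 ≤ N) (t : ℤ) (ht : t ≠ 0) (htj : t.natAbs ≤ N ^ j) :
    ((primesQ N).filter (fun q => q ∣ t.natAbs)).card ≤ j := by
  set B := (primesQ N).filter (fun q => q ∣ t.natAbs) with hB
  have h1 : ∏ p ∈ B, p ∣ t.natAbs := by
    apply Finset.prod_primes_dvd
    · intro p hp
      simp only [hB, primesQ, Finset.mem_filter] at hp
      exact hp.1.2.prime
    · intro p hp
      simp only [hB, Finset.mem_filter] at hp
      exact hp.2
  have h2 : N ^ B.card ≤ ∏ p ∈ B, p := by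
    apply Finset.pow_card_le_prod
    intro p hp
    simp only [hB, primesQ, Finset.mem_filter, Finset.mem_Ioc] at hp
    exact hp.1.1.1.le
  have h3 : ∏ p ∈ B, p ≤ t.natAbs := Nat.le_of_dvd (Int.natAbs_pos.2 ht) h1
  exact (Nat.pow_le_pow_iff_right (by omega)).1 (h2.trans (h3.trans htj))

open scoped Classical in
lemma card_bad_le {N j s : ℕ} (hN : 2 ≤ N) (ξ : ℝ) (h1 : (s : ℝ) < |ξ|)
    (h2 : |ξ| + s ≤ (N : ℝ) ^ j) :
    ((primesQ N).filter (fun q : ℕ => ∃ m : ℤ, |ξ - m * q| < s)).card ≤ (2 * s + 1) * j := by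
  have hsub : (primesQ N).filter (fun q : ℕ => ∃ m : ℤ, |ξ - m * q| < s) ⊆
      (Finset.Icc ⌈ξ - s⌉ ⌊ξ + s⌋).biUnion
        (fun t => (primesQ N).filter (fun q => q ∣ t.natAbs)) := by
    intro q hq
    simp only [Finset.mem_filter, Finset.mem_biUnion, Finset.mem_Icc] at hq ⊢
    obtain ⟨hq, m, hm⟩ := hq
    rw [abs_lt] at hm
    refine ⟨m * q, ⟨Int.ceil_le.2 ?_, Int.le_floor.2 ?_⟩, hq, ?_⟩
    · push_cast; linarith
    · push_cast; linarith
    · rw [Int.natAbs_mul]; exact Dvd.intro_left m.natAbs (by simp)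
  refine (Finset.card_le_card hsub).trans ?_
  have hcard : (Finset.Icc ⌈ξ - s⌉ ⌊ξ + s⌋).card ≤ 2 * s + 1 := by
    rw [Int.card_Icc]
    have ha := Int.le_ceil (ξ - s)
    have hb := Int.floor_le (ξ + s)
    have : (⌊ξ + s⌋ : ℝ) - ⌈ξ - s⌉ ≤ 2 * s := by linarith
    have : ⌊ξ + s⌋ - ⌈ξ - s⌉ ≤ 2 * s := by exact_mod_cast this
    omega
  refine (Finset.card_biUnion_le_card_mul _ _ j ?_).trans (Nat.mul_le_mul_right _ hcard)
  intro t ht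
  rw [Finset.mem_Icc, Int.ceil_le, Int.le_floor] at ht
  apply card_dvd_le hN
  · rintro rfl
    simp only [Int.cast_zero] at ht
    have : |ξ| ≤ s := abs_le.2 ⟨by linarith, by linarith⟩
    linarith
  · have h3 : |(t : ℝ)| ≤ (N : ℝ) ^ j := by
      refine le_trans ?_ h2
      have := abs_le.2 (⟨by linarith, by linarith⟩ : -(s : ℝ) ≤ t - ξ ∧ t - ξ ≤ s)
      have := abs_sub_abs_le_abs_sub (t : ℝ) ξ
      linarith
    have h4 : ((t.natAbs : ℕ) : ℝ) = |(t : ℝ)| := by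
      rw [Nat.cast_natAbs, Int.cast_abs]
    rw [← h4] at h3
    exact_mod_cast h3

/-- The law of `a / q`, with `q` a uniform prime in `(N, N ^ 3]` and `a` uniform in
`{1, …, q / l + 1}`. -/
noncomputable def nuM (N l : ℕ) : Measure ℝ :=
  ∑ q ∈ primesQ N, ∑ a ∈ Finset.range (q / l + 1),
    ENNReal.ofReal (((primesQ N).card : ℝ)⁻¹ * ((q / l + 1 : ℕ) : ℝ)⁻¹) •
      Measure.dirac (((a + 1 : ℕ) : ℝ) / q)

lemma nuM_prob {N : ℕ} (hN : 12 ≤ N) (l : ℕ) : IsProbabilityMeasure (nuM N l) := by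
  have hc : (0 : ℝ) < (primesQ N).card := by
    have := card_primesQ hN
    exact_mod_cast (by omega : 0 < (primesQ N).card)
  constructor
  simp only [nuM, Measure.coe_finsetSum, Finset.sum_apply, Measure.smul_apply, measure_univ,
    smul_eq_mul, mul_one, Finset.sum_const, Finset.card_range]
  have : ∀ q ∈ primesQ N, (q / l + 1) • ENNReal.ofReal (((primesQ N).card : ℝ)⁻¹ *
      ((q / l + 1 : ℕ) : ℝ)⁻¹) = ENNReal.ofReal (((primesQ N).card : ℝ)⁻¹) := by
    intro q _
    rw [← ENNReal.ofReal_nsmul, nsmul_eq_mul]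
    congr 1
    have : (0 : ℝ) < ((q / l + 1 : ℕ) : ℝ) := by positivity
    field_simp
  rw [Finset.sum_congr rfl this, Finset.sum_const, ← ENNReal.ofReal_nsmul, nsmul_eq_mul,
    mul_inv_cancel₀ hc.ne', ENNReal.ofReal_one]

lemma fourierT_nuM (N l : ℕ) (ξ : ℝ) :
    fourierT (nuM N l) ξ = ∑ q ∈ primesQ N, ((((primesQ N).card : ℝ)⁻¹ *
      ((q / l + 1 : ℕ) : ℝ)⁻¹ : ℝ) : ℂ) * ∑ a ∈ Finset.range (q / l + 1),
        Complex.exp (((-2 * Real.pi * ξ * (((a + 1 : ℕ) : ℝ) / q) : ℝ) : ℂ) * Complex.I) := by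
  have hint : ∀ (x : ℝ) (c : ℝ), Integrable (fun x : ℝ => Complex.exp
      (((-2 * Real.pi * ξ * x : ℝ) : ℂ) * Complex.I)) (ENNReal.ofReal c • Measure.dirac x) := by
    intro x c
    apply Integrable.smul_measure _ ENNReal.ofReal_ne_top
    exact integrable_dirac (by simp)
  unfold fourierT nuM
  rw [integral_finsetSum_measure]
  · refine Finset.sum_congr rfl fun q _ => ?_
    rw [integral_finsetSum_measure (fun a _ => hint _ _), Finset.mul_sum]
    refine Finset.sum_congr rfl fun a _ => ?_
    rw [integral_smul_measure, integral_dirac, ENNReal.toReal_ofReal (by positivity)]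
    simp only [Complex.real_smul]
  · intro q _
    exact integrable_finsetSum_measure.2 (fun a _ => hint _ _)

lemma nuM_ae {N l : ℕ} (hl : 0 < l) (hN : l ≤ N) :
    ∀ᵐ x ∂(nuM N l), ∃ a q : ℕ, 0 < a ∧ 1 < q ∧ q ≤ N ^ 3 ∧ x = (a : ℝ) / q ∧ x ≤ 2 / l := by
  have : {x : ℝ | ∃ a q : ℕ, 0 < a ∧ 1 < q ∧ q ≤ N ^ 3 ∧ x = (a : ℝ) / q ∧ x ≤ 2 / l}.Countable := by
    refine (Set.countable_range (fun p : ℕ × ℕ => (p.1 : ℝ) / p.2)).mono ?_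
    rintro x ⟨a, q, -, -, -, h, -⟩
    exact ⟨(a, q), h.symm⟩
  rw [ae_iff]
  change nuM N l ({x : ℝ | ∃ a q : ℕ, 0 < a ∧ 1 < q ∧ q ≤ N ^ 3 ∧ x = (a : ℝ) / q ∧ x ≤ 2 / l}ᶜ) = 0
  simp only [nuM, Measure.coe_finsetSum, Finset.sum_apply, Measure.smul_apply, smul_eq_mul]
  refine Finset.sum_eq_zero fun q hq => Finset.sum_eq_zero fun a ha => ?_
  rw [Measure.dirac_apply' _ this.measurableSet.compl, Set.indicator_of_notMem, mul_zero]
  simp only [Set.mem_compl_iff, not_not]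
  simp only [primesQ, Finset.mem_filter, Finset.mem_Ioc, Finset.mem_range] at hq ha
  refine ⟨a + 1, q, by omega, hq.2.one_lt, hq.1.2, rfl, ?_⟩
  have hq0 : (0 : ℝ) < q := by exact_mod_cast hq.2.pos
  have hl0 : (0 : ℝ) < l := by exact_mod_cast hl
  rw [div_le_div_iff₀ hq0 hl0]
  have h1 : q / l * l ≤ q := Nat.div_mul_le_self q l
  have h2 : (a + 1) * l ≤ 2 * q := by nlinarith
  exact_mod_cast h2

lemma term_bound {l q : ℕ} (hl : 0 < l) (hq : 0 < q) (ξ T : ℝ) (hT : 0 < T)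
    (h : ∀ m : ℤ, T ≤ |ξ - m * q|) :
    ((q / l + 1 : ℕ) : ℝ)⁻¹ * ‖∑ a ∈ Finset.range (q / l + 1),
        Complex.exp (((-2 * Real.pi * ξ * (((a + 1 : ℕ) : ℝ) / q) : ℝ) : ℂ) * Complex.I)‖
      ≤ l / (2 * T) := by
  have h1 := geom_bound ξ q (q / l + 1) hq T hT h
  have hA : (0 : ℝ) < ((q / l + 1 : ℕ) : ℝ) := by positivity
  rw [inv_mul_le_iff₀ hA]
  refine h1.trans ?_
  have h2 : (q : ℝ) ≤ ((q / l + 1 : ℕ) : ℝ) * l := by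
    have : q < l * (q / l + 1) := Nat.lt_mul_div_succ q hl
    have : q ≤ (q / l + 1) * l := by rw [mul_comm]; exact this.le
    exact_mod_cast this
  rw [← mul_div_assoc]
  gcongr

lemma term_bound_one {l q : ℕ} (ξ : ℝ) :
    ((q / l + 1 : ℕ) : ℝ)⁻¹ * ‖∑ a ∈ Finset.range (q / l + 1),
        Complex.exp (((-2 * Real.pi * ξ * (((a + 1 : ℕ) : ℝ) / q) : ℝ) : ℂ) * Complex.I)‖
      ≤ 1 := by
  have hA : (0 : ℝ) < ((q / l + 1 : ℕ) : ℝ) := by positivity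
  rw [inv_mul_le_iff₀ hA, mul_one]
  refine (norm_sum_le _ _).trans ?_
  simp only [Complex.norm_exp_ofReal_mul_I]
  simp

lemma fourierT_nuM_le (N l : ℕ) (ξ : ℝ) :
    ‖fourierT (nuM N l) ξ‖ ≤ ∑ q ∈ primesQ N, ((primesQ N).card : ℝ)⁻¹ *
      (((q / l + 1 : ℕ) : ℝ)⁻¹ * ‖∑ a ∈ Finset.range (q / l + 1),
        Complex.exp (((-2 * Real.pi * ξ * (((a + 1 : ℕ) : ℝ) / q) : ℝ) : ℂ) * Complex.I)‖) := by
  rw [fourierT_nuM]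
  refine (norm_sum_le _ _).trans (le_of_eq (Finset.sum_congr rfl fun q _ => ?_))
  rw [norm_mul, Complex.norm_real, Real.norm_of_nonneg (by positivity), mul_assoc]

lemma bound_low {N l : ℕ} (hN : 12 ≤ N) (hl : 0 < l) (ξ : ℝ) (h0 : ξ ≠ 0)
    (h1 : |ξ| ≤ (N : ℝ) / 2) : ‖fourierT (nuM N l) ξ‖ ≤ l / (2 * |ξ|) := by
  have hc : (0 : ℝ) < (primesQ N).card := by
    have := card_primesQ hN
    exact_mod_cast (by omega : 0 < (primesQ N).card)
  refine (fourierT_nuM_le N l ξ).trans ?_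
  rw [← Finset.mul_sum, inv_mul_le_iff₀ hc, ← nsmul_eq_mul]
  refine Finset.sum_le_card_nsmul _ _ _ fun q hq => ?_
  simp only [primesQ, Finset.mem_filter, Finset.mem_Ioc] at hq
  refine term_bound hl hq.2.pos ξ |ξ| (abs_pos.2 h0) fun m => ?_
  rcases eq_or_ne m 0 with rfl | hm
  · simp
  · have h2 : (N : ℝ) ≤ |(m : ℝ) * q| := by
      rw [abs_mul, Nat.abs_cast]
      have h3 : (1 : ℝ) ≤ |(m : ℝ)| := by exact_mod_cast Int.one_le_abs hm
      have h4 : (N : ℝ) ≤ q := by exact_mod_cast hq.1.1.le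
      nlinarith
    have := abs_sub_abs_le_abs_sub ((m : ℝ) * q) ξ
    rw [abs_sub_comm] at this
    linarith

open scoped Classical in
lemma bound_mid {S l j : ℕ} (hS : 12 ≤ S) (hl : 0 < l) (ξ : ℝ)
    (h1 : ((S ^ 4 : ℕ) : ℝ) / 2 ≤ |ξ|) (h2 : |ξ| + ((S ^ 2 : ℕ) : ℝ) ≤ ((S ^ 4 : ℕ) : ℝ) ^ j) :
    ‖fourierT (nuM (S ^ 4) l) ξ‖ ≤ (l + 3 * j) / (S : ℝ) ^ 2 := by
  set N := S ^ 4 with hNdef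
  have hSN : S ≤ N := Nat.le_self_pow (by norm_num) S
  have hN : 12 ≤ N := hS.trans hSN
  have hcN := card_primesQ hN
  have hcNr : (S : ℝ) ^ 4 ≤ (primesQ N).card := by exact_mod_cast hcN
  have hSr : (12 : ℝ) ≤ S := by exact_mod_cast hS
  have hc : (0 : ℝ) < (primesQ N).card := lt_of_lt_of_le (by positivity) hcNr
  have hlt : ((S ^ 2 : ℕ) : ℝ) < |ξ| := by
    refine lt_of_lt_of_le ?_ h1
    rw [hNdef]
    push_cast
    have : (144 : ℝ) ≤ (S : ℝ) ^ 2 := by nlinarith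
    nlinarith
  have hbad := card_bad_le (by omega : 2 ≤ N) ξ hlt h2
  refine (fourierT_nuM_le N l ξ).trans ?_
  rw [← Finset.mul_sum, inv_mul_le_iff₀ hc]
  rw [← Finset.sum_filter_add_sum_filter_not (primesQ N)
    (fun q : ℕ => ∃ m : ℤ, |ξ - m * q| < ((S ^ 2 : ℕ) : ℝ))]
  have hs2 : (0 : ℝ) < ((S ^ 2 : ℕ) : ℝ) := by positivity
  have e1 := Finset.sum_le_card_nsmul ((primesQ N).filter
    (fun q : ℕ => ∃ m : ℤ, |ξ - m * q| < ((S ^ 2 : ℕ) : ℝ))) _ 1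
    (fun q _ => term_bound_one (l := l) (q := q) ξ)
  have e2 := Finset.sum_le_card_nsmul ((primesQ N).filter
    (fun q : ℕ => ¬ ∃ m : ℤ, |ξ - m * q| < ((S ^ 2 : ℕ) : ℝ))) _ (l / (2 * ((S ^ 2 : ℕ) : ℝ)))
    (fun q hq => by
      simp only [primesQ, Finset.mem_filter, Finset.mem_Ioc] at hq
      refine term_bound hl hq.1.2.pos ξ _ hs2 fun m => ?_
      by_contra! hh
      exact hq.2 ⟨m, hh⟩)
  refine (add_le_add e1 e2).trans ?_
  rw [nsmul_eq_mul, nsmul_eq_mul, mul_one]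
  have e3 : (((primesQ N).filter
    (fun q : ℕ => ∃ m : ℤ, |ξ - m * q| < ((S ^ 2 : ℕ) : ℝ))).card : ℝ) ≤
      3 * (S : ℝ) ^ 2 * j := by
    have : (((primesQ N).filter
      (fun q : ℕ => ∃ m : ℤ, |ξ - m * q| < ((S ^ 2 : ℕ) : ℝ))).card : ℝ) ≤
        (2 * (S : ℝ) ^ 2 + 1) * j := by exact_mod_cast hbad
    refine this.trans ?_
    gcongr
    nlinarith
  have e4 : (((primesQ N).filter
    (fun q : ℕ => ¬ ∃ m : ℤ, |ξ - m * q| < ((S ^ 2 : ℕ) : ℝ))).card : ℝ) ≤ (primesQ N).card := by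
    exact_mod_cast Finset.card_filter_le _ _
  have e5 : (l : ℝ) / (2 * ((S ^ 2 : ℕ) : ℝ)) ≤ l / (S : ℝ) ^ 2 := by
    push_cast
    gcongr
    nlinarith [sq_nonneg (S : ℝ)]
  have e6 : 3 * (S : ℝ) ^ 2 * j ≤ (primesQ N).card * (3 * j / (S : ℝ) ^ 2) := by
    calc 3 * (S : ℝ) ^ 2 * j = (S : ℝ) ^ 4 * (3 * j / (S : ℝ) ^ 2) := by field_simp
      _ ≤ _ := by gcongr
  calc _ ≤ 3 * (S : ℝ) ^ 2 * j + (primesQ N).card * (l / (S : ℝ) ^ 2) := by gcongr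
    _ ≤ (primesQ N).card * (3 * j / (S : ℝ) ^ 2) + (primesQ N).card * (l / (S : ℝ) ^ 2) := by
      gcongr
    _ = _ := by ring

lemma exists_product (ν : ℕ → Measure ℝ) [∀ k, IsProbabilityMeasure (ν k)]
    (good : ℕ → ℝ → Prop) (hgood : ∀ k, ∀ᵐ x ∂(ν k), good k x)
    (hsum : ∀ x : ℕ → ℝ, (∀ k, good k (x k)) → Summable x)
    (P : Set ℝ) (hP : MeasurableSet P)
    (hxP : ∀ x : ℕ → ℝ, (∀ k, good k (x k)) → ∑' k, x k ∈ P) :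
    ∃ μ : Measure ℝ, IsProbabilityMeasure μ ∧ μ Pᶜ = 0 ∧
      ∀ k ξ, ‖fourierT μ ξ‖ ≤ ‖fourierT (ν k) ξ‖ := by
  set Pr : Measure (ℕ → ℝ) := Measure.infinitePi ν with hPr
  have hae : ∀ᵐ ω ∂Pr, ∀ k, good k (ω k) := by
    rw [ae_all_iff]
    intro k
    exact (measurePreserving_eval_infinitePi ν k).quasiMeasurePreserving.ae (hgood k)
  have htend : ∀ᵐ ω ∂Pr, Tendsto (fun n => ∑ i ∈ Finset.range n, ω i) atTop
      (nhds (∑' k, ω k)) := by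
    filter_upwards [hae] with ω hω
    exact (hsum ω hω).hasSum.tendsto_sum_nat
  have hpm : ∀ n, Measurable (fun ω : ℕ → ℝ => ∑ i ∈ Finset.range n, ω i) := by
    intro n; fun_prop
  have hmeas : AEMeasurable (fun ω : ℕ → ℝ => ∑' k, ω k) Pr := by
    have hpm' : ∀ n, AEMeasurable (fun ω : ℕ → ℝ => ∑ i ∈ Finset.range n, ω i) Pr :=
      fun n => (hpm n).aemeasurable
    exact aemeasurable_of_tendsto_metrizable_ae' hpm' htend
  refine ⟨Pr.map (fun ω => ∑' k, ω k), Measure.isProbabilityMeasure_map hmeas, ?_, ?_⟩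
  · have : ∀ᵐ x ∂(Pr.map (fun ω => ∑' k, ω k)), x ∈ P := by
      refine (ae_map_iff (p := fun x => x ∈ P) hmeas hP).2 ?_
      filter_upwards [hae] with ω hω using hxP ω hω
    exact this
  · intro k ξ
    set e : ℝ → ℂ := fun x => Complex.exp (((-2 * Real.pi * ξ * x : ℝ) : ℂ) * Complex.I) with he
    have hec : Continuous e := by rw [he]; fun_prop
    have hen : ∀ x, ‖e x‖ = 1 := fun x => Complex.norm_exp_ofReal_mul_I _
    have hFle : ∀ i, ‖fourierT (ν i) ξ‖ ≤ 1 := by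
      intro i
      have := norm_integral_le_of_norm_le_const (μ := ν i) (f := e) (C := 1)
        (Eventually.of_forall fun x => (hen x).le)
      rw [probReal_univ, mul_one] at this
      exact this
    have hFμ : fourierT (Pr.map (fun ω => ∑' k, ω k)) ξ = ∫ ω, e (∑' k, ω k) ∂Pr :=
      integral_map hmeas hec.aestronglyMeasurable
    rw [hFμ]
    have hlim : Tendsto (fun n => ∫ ω, e (∑ i ∈ Finset.range n, ω i) ∂Pr) atTop
        (nhds (∫ ω, e (∑' k, ω k) ∂Pr)) := by
      refine tendsto_integral_of_dominated_convergence (fun _ => 1) (fun n => ?_)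
        (integrable_const _) (fun n => Eventually.of_forall fun ω => (hen _).le) ?_
      · exact (hec.measurable.comp (hpm n)).aestronglyMeasurable
      · filter_upwards [htend] with ω hω
        exact (hec.tendsto _).comp hω
    refine le_of_tendsto hlim.norm ?_
    filter_upwards [eventually_gt_atTop k] with n hn
    have hprod : ∫ ω, e (∑ i ∈ Finset.range n, ω i) ∂Pr =
        ∏ i : Fin n, fourierT (ν i) ξ := by
      have hind : ProbabilityTheory.iIndepFun (fun (i : Fin n) (ω : ℕ → ℝ) => ω i) Pr :=
        (ProbabilityTheory.iIndepFun_infinitePi (P := ν) (X := fun _ x => x)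
          (fun _ => measurable_id)).precomp (g := fun i : Fin n => (i : ℕ)) Fin.val_injective
      have h1 := hind.integral_fun_prod_comp (f := fun _ => e)
        (fun i => (measurable_pi_apply _).aemeasurable) (fun i => hec.aestronglyMeasurable)
      have h2 : ∀ ω : ℕ → ℝ, e (∑ i ∈ Finset.range n, ω i) = ∏ i : Fin n, e (ω i) := by
        intro ω
        rw [he]
        simp only
        rw [← Complex.exp_sum, Finset.sum_range]
        congr 1
        push_cast
        rw [Finset.mul_sum, Finset.sum_mul]
      simp_rw [h2]
      rw [h1]
      refine Finset.prod_congr rfl fun i _ => ?_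
      rw [← (measurePreserving_eval_infinitePi ν (i : ℕ)).map_eq]
      exact (integral_map (measurable_pi_apply _).aemeasurable hec.aestronglyMeasurable).symm
    rw [hprod, norm_prod, ← Finset.mul_prod_erase _ _ (Finset.mem_univ (⟨k, hn⟩ : Fin n))]
    exact mul_le_of_le_one_right (norm_nonneg _)
      (Finset.prod_le_one (fun _ _ => norm_nonneg _) (fun i _ => hFle i))

lemma liouville_sum (Nn E l : ℕ → ℕ) (hN : ∀ k, 0 < Nn k) (hE0 : E 0 = 1)
    (hE : ∀ k, E (k + 1) = E k * Nn k ^ 3) (hl : ∀ k, l k = 2 ^ (k + 3) * E k ^ k)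
    (x : ℕ → ℝ) (hx : ∀ k, ∃ a q : ℕ, 0 < a ∧ 1 < q ∧ q ≤ Nn k ^ 3 ∧ x k = (a : ℝ) / q ∧
      x k ≤ 2 / l k) : Summable x ∧ Liouville (∑' k, x k) := by
  choose a q ha hq1 hqN hxe hxl using hx
  have hEpos : ∀ k, 0 < E k := by
    intro k
    induction k with
    | zero => simp [hE0]
    | succ k ih => rw [hE]; have := hN k; positivity
  have hEmono : Monotone E := by
    refine monotone_nat_of_le_succ fun k => ?_
    rw [hE]
    exact Nat.le_mul_of_pos_right _ (by have := hN k; positivity)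
  have hxpos : ∀ k, 0 < x k := by
    intro k
    rw [hxe]
    have h1 : (0 : ℝ) < a k := by exact_mod_cast ha k
    have h2 : (0 : ℝ) < q k := by exact_mod_cast (zero_lt_one.trans (hq1 k))
    positivity
  have hxb : ∀ k i, x (i + k) ≤ (1 / (4 * (E k : ℝ) ^ k)) * (1 / 2) ^ i := by
    intro k i
    refine (hxl _).trans ?_
    have h1 : E k ^ k ≤ E (i + k) ^ (i + k) :=
      (Nat.pow_le_pow_left (hEmono (Nat.le_add_left k i)) k).trans
        (Nat.pow_le_pow_right (hEpos _) (Nat.le_add_left k i))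
    have h2 : 2 ^ (i + 3) * E k ^ k ≤ l (i + k) := by
      rw [hl]
      exact Nat.mul_le_mul (Nat.pow_le_pow_right (by norm_num) (by omega)) h1
    have h3 : (2 : ℝ) ^ (i + 3) * (E k : ℝ) ^ k ≤ l (i + k) := by exact_mod_cast h2
    have h4 : (0 : ℝ) < E k := by exact_mod_cast hEpos k
    calc (2 : ℝ) / l (i + k) ≤ 2 / ((2 : ℝ) ^ (i + 3) * (E k : ℝ) ^ k) := by gcongr
      _ = _ := by
        rw [pow_add, one_div_pow]
        field_simp
        norm_num
  have hgeo : Summable (fun i : ℕ => (1 / 2 : ℝ) ^ i) := summable_geometric_two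
  have hsum : Summable x := by
    refine Summable.of_nonneg_of_le (fun k => (hxpos k).le) (fun i => hxb 0 i) (hgeo.mul_left _)
  refine ⟨hsum, fun n => ?_⟩
  have hpart : ∀ k, ∃ p : ℕ, ∑ i ∈ Finset.range k, x i =
      (p : ℝ) / ((∏ i ∈ Finset.range k, q i : ℕ) : ℝ) := by
    intro k
    induction k with
    | zero => exact ⟨0, by simp⟩
    | succ k ih =>
      obtain ⟨p, hp⟩ := ih
      refine ⟨p * q k + (∏ i ∈ Finset.range k, q i) * a k, ?_⟩
      have h1 : ((∏ i ∈ Finset.range k, q i : ℕ) : ℝ) ≠ 0 := by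
        have : (∏ i ∈ Finset.range k, q i : ℕ) ≠ 0 :=
          Finset.prod_ne_zero_iff.2 fun i _ => by have := hq1 i; omega
        exact_mod_cast this
      have h2 : (q k : ℝ) ≠ 0 := by
        have := hq1 k
        exact_mod_cast (by omega : q k ≠ 0)
      rw [Finset.sum_range_succ, hp, hxe, Finset.prod_range_succ, div_add_div _ _ h1 h2]
      push_cast
      ring
  obtain ⟨p, hp⟩ := hpart (n + 1)
  set D : ℕ := ∏ i ∈ Finset.range (n + 1), q i with hD
  have hDE : ∀ k, ∏ i ∈ Finset.range k, q i ≤ E k := by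
    intro k
    induction k with
    | zero => simp [hE0]
    | succ k ih => rw [Finset.prod_range_succ, hE]; exact Nat.mul_le_mul ih (hqN k)
  have hD1 : 1 < D := by
    rw [hD, Finset.prod_range_succ]
    have h1 : 0 < ∏ i ∈ Finset.range n, q i :=
      Finset.prod_pos fun i _ => by have := hq1 i; omega
    have := hq1 n
    nlinarith
  have hsplit := hsum.sum_add_tsum_nat_add (n + 1)
  have htpos : 0 < ∑' i, x (i + (n + 1)) :=
    ((summable_nat_add_iff (n + 1)).2 hsum).tsum_pos (fun i => (hxpos _).le) 0 (hxpos _)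
  have htle : ∑' i, x (i + (n + 1)) ≤ (1 / (4 * (E (n + 1) : ℝ) ^ (n + 1))) * 2 := by
    rw [← tsum_geometric_two, ← tsum_mul_left]
    exact ((summable_nat_add_iff (n + 1)).2 hsum).tsum_le_tsum (fun i => hxb (n + 1) i)
      (hgeo.mul_left _)
  have hdiff : ∑' k, x k - ((p : ℤ) : ℝ) / ((D : ℤ) : ℝ) = ∑' i, x (i + (n + 1)) := by
    rw [← hsplit, hp]; simp
  refine ⟨p, D, by exact_mod_cast hD1, ?_, ?_⟩
  · intro hh
    rw [hh] at hdiff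
    simp only [sub_self] at hdiff
    linarith
  · rw [hdiff, abs_of_pos htpos]
    refine htle.trans_lt ?_
    have hD0 : (1 : ℝ) < D := by exact_mod_cast hD1
    have h1 : (D : ℝ) ≤ E (n + 1) := by exact_mod_cast hDE (n + 1)
    have h2 : (D : ℝ) ^ n ≤ (E (n + 1) : ℝ) ^ (n + 1) :=
      (pow_le_pow_right₀ hD0.le (Nat.le_succ n)).trans (pow_le_pow_left₀ (by linarith) h1 _)
    have h3 : (0 : ℝ) < (D : ℝ) ^ n := by positivity
    have h5 : 0 < (E (n + 1) : ℝ) ^ (n + 1) := h3.trans_le h2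
    calc 1 / (4 * (E (n + 1) : ℝ) ^ (n + 1)) * 2 = (1 / 2) * (1 / (E (n + 1) : ℝ) ^ (n + 1)) := by
          ring
      _ < 1 * (1 / (E (n + 1) : ℝ) ^ (n + 1)) := by gcongr; norm_num
      _ ≤ 1 / (((D : ℕ) : ℤ) : ℝ) ^ n := by
        rw [one_mul]
        simp only [Int.cast_natCast]
        gcongr

lemma exists_S (g : ℝ → ℝ)
    (hg : ∀ α > (0 : ℝ), ∃ M > (0 : ℝ), ∀ ξ, M ≤ ξ → ξ ^ (-α) ≤ g ξ) (k E : ℕ) :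
    ∃ S : ℕ, 12 ≤ S ∧ E ≤ S ∧ 2 ^ (k + 4) ≤ S ∧
      2 ^ (k + 3) * E ^ k + 3 * (8 * k + 11) ≤ S ∧
      (∀ ξ : ℝ, ((S ^ 4 : ℕ) : ℝ) / 2 ≤ ξ → ξ ^ (-(1 / (4 * (8 * k + 10)) : ℝ)) ≤ g ξ) ∧
      (∀ ξ : ℝ, ((S ^ 4 : ℕ) : ℝ) / 2 ≤ ξ → ξ ^ (-(1 / 2 : ℝ)) ≤ g ξ) := by
  obtain ⟨M1, -, h1⟩ := hg (1 / (4 * (8 * k + 10))) (by positivity)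
  obtain ⟨M2, -, h2⟩ := hg (1 / 2) (by positivity)
  obtain ⟨S, hS⟩ : ∃ S, S = 12 + E + 2 ^ (k + 4) + (2 ^ (k + 3) * E ^ k + 3 * (8 * k + 11)) +
    ⌈M1⌉₊ + ⌈M2⌉₊ := ⟨_, rfl⟩
  generalize 2 ^ (k + 4) = u at *
  generalize 2 ^ (k + 3) * E ^ k = v at *
  have hS12 : (12 : ℝ) ≤ S := by exact_mod_cast (by omega : 12 ≤ S)
  have hlow : (S : ℝ) ≤ ((S ^ 4 : ℕ) : ℝ) / 2 := by
    push_cast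
    have : (12 : ℝ) ^ 3 ≤ (S : ℝ) ^ 3 := by gcongr
    nlinarith
  have a1 : M1 ≤ S := (Nat.le_ceil M1).trans (by exact_mod_cast (by omega : ⌈M1⌉₊ ≤ S))
  have a2 : M2 ≤ S := (Nat.le_ceil M2).trans (by exact_mod_cast (by omega : ⌈M2⌉₊ ≤ S))
  exact ⟨S, by omega, by omega, by omega, by omega, fun ξ hξ => h1 ξ (by linarith),
    fun ξ hξ => h2 ξ (by linarith)⟩

lemma main_exists (g : ℝ → ℝ)
    (hg : ∀ α > (0 : ℝ), ∃ M > (0 : ℝ), ∀ ξ, M ≤ ξ → ξ ^ (-α) ≤ g ξ) :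
    ∃ μ : Measure ℝ, IsProbabilityMeasure μ ∧ μ {x : ℝ | Liouville x}ᶜ = 0 ∧
      ∃ M' > (0 : ℝ), ∀ ξ : ℝ, M' ≤ |ξ| → ‖fourierT μ ξ‖ ≤ g |ξ| := by
  choose Φ hΦ using exists_S g hg
  let E : ℕ → ℕ := fun k => Nat.rec 1 (fun k e => e * ((Φ k e) ^ 4) ^ 3) k
  let S : ℕ → ℕ := fun k => Φ k (E k)
  let N : ℕ → ℕ := fun k => S k ^ 4
  let l : ℕ → ℕ := fun k => 2 ^ (k + 3) * E k ^ k
  have hE0 : E 0 = 1 := rfl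
  have hE : ∀ k, E (k + 1) = E k * N k ^ 3 := fun k => rfl
  have hl : ∀ k, l k = 2 ^ (k + 3) * E k ^ k := fun k => rfl
  have hNdef : ∀ k, N k = S k ^ 4 := fun k => rfl
  have hS12 : ∀ k, 12 ≤ S k := fun k => (hΦ k (E k)).1
  have hES : ∀ k, E k ≤ S k := fun k => (hΦ k (E k)).2.1
  have h2S : ∀ k, 2 ^ (k + 4) ≤ S k := fun k => (hΦ k (E k)).2.2.1
  have hlS : ∀ k, l k + 3 * (8 * k + 11) ≤ S k := fun k => (hΦ k (E k)).2.2.2.1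
  have hg1 : ∀ k, ∀ ξ : ℝ, ((N k : ℕ) : ℝ) / 2 ≤ ξ →
      ξ ^ (-(1 / (4 * (8 * k + 10)) : ℝ)) ≤ g ξ := fun k => (hΦ k (E k)).2.2.2.2.1
  have hg2 : ∀ k, ∀ ξ : ℝ, ((N k : ℕ) : ℝ) / 2 ≤ ξ → ξ ^ (-(1 / 2 : ℝ)) ≤ g ξ :=
    fun k => (hΦ k (E k)).2.2.2.2.2
  clear_value N l S E
  have hSN : ∀ k, S k ≤ N k := fun k => by
    rw [hNdef]; exact Nat.le_self_pow (by norm_num) _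
  have hN12 : ∀ k, 12 ≤ N k := fun k => (hS12 k).trans (hSN k)
  have hEpos : ∀ k, 0 < E k := by
    intro k
    induction k with
    | zero => simp [hE0]
    | succ k ih => rw [hE]; have := hN12 k; positivity
  have hlpos : ∀ k, 0 < l k := fun k => by rw [hl]; have := hEpos k; positivity
  have hlN : ∀ k, l k ≤ N k := fun k => by
    have := hlS k
    have := hSN k
    omega
  have : ∀ k, IsProbabilityMeasure (nuM (N k) (l k)) := fun k => nuM_prob (hN12 k) _
  have hLio := liouville_sum N E l (fun k => by have := hN12 k; omega) hE0 hE hl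
  obtain ⟨μ, hμ, hμL, hμF⟩ := exists_product (fun k => nuM (N k) (l k)) _
    (fun k => nuM_ae (hlpos k) (hlN k)) (fun x hx => (hLio x hx).1) {x | Liouville x}
    IsGδ.setOfPred_liouville.measurableSet (fun x hx => (hLio x hx).2)
  refine ⟨μ, hμ, hμL, (N 0 : ℝ) / 2, ?_, fun ξ hξ => ?_⟩
  · have := hN12 0
    have : (0 : ℝ) < N 0 := by exact_mod_cast (by omega : 0 < N 0)
    positivity
  have hex : ∃ k, |ξ| < (N k : ℝ) / 2 := by
    obtain ⟨k, hk⟩ := exists_nat_gt (2 * |ξ|)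
    refine ⟨k, ?_⟩
    have h1 : k ≤ N k := by
      have h1 := h2S k
      have h2 := hSN k
      have h3 : k < 2 ^ k := Nat.lt_two_pow_self
      have h4 : 2 ^ k ≤ 2 ^ (k + 4) := Nat.pow_le_pow_right (by norm_num) (by omega)
      omega
    have : (k : ℝ) ≤ N k := by exact_mod_cast h1
    linarith
  classical
  obtain ⟨k, hk1, hk2⟩ : ∃ k, (N k : ℝ) / 2 ≤ |ξ| ∧ |ξ| < (N (k + 1) : ℝ) / 2 := by
    have hspec := Nat.find_spec hex
    have hmin := fun m => Nat.find_min hex (m := m)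
    rcases hn : Nat.find hex with _ | k
    · rw [hn] at hspec; linarith
    · rw [hn] at hspec hmin
      exact ⟨k, not_lt.1 (hmin k (Nat.lt_succ_self k)), hspec⟩
  have hNr : (12 : ℝ) ≤ N k := by exact_mod_cast hN12 k
  have hξpos : 0 < |ξ| := by linarith
  have hξ0 : ξ ≠ 0 := abs_pos.1 hξpos
  rcases le_total |ξ| ((l (k + 1) : ℝ) ^ 2) with hle | hge
  · -- middle range
    refine (hμF k ξ).trans (le_trans ?_ (hg1 k _ hk1))
    have hR : l (k + 1) ^ 2 ≤ N k ^ (8 * k + 10) := by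
      have h1 : l (k + 1) ≤ N k ^ (4 * k + 5) := by
        rw [hl, hE]
        calc 2 ^ (k + 1 + 3) * (E k * N k ^ 3) ^ (k + 1)
            ≤ N k * (N k * N k ^ 3) ^ (k + 1) := by
              refine Nat.mul_le_mul ?_ (Nat.pow_le_pow_left
                (Nat.mul_le_mul_right _ ((hES k).trans (hSN k))) _)
              exact (h2S k).trans (hSN k)
          _ = N k ^ (4 * k + 5) := by ring
      calc l (k + 1) ^ 2 ≤ (N k ^ (4 * k + 5)) ^ 2 := Nat.pow_le_pow_left h1 2
        _ = _ := by rw [← pow_mul]; congr 1; ring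
    have hRr : |ξ| ≤ (N k : ℝ) ^ (8 * k + 10) := hle.trans (by exact_mod_cast hR)
    have hS2 : ((S k ^ 2 : ℕ) : ℝ) ≤ (N k : ℝ) ^ (8 * k + 10) := by
      have : S k ^ 2 ≤ N k ^ (8 * k + 10) :=
        (Nat.pow_le_pow_left (hSN k) 2).trans
          (Nat.pow_le_pow_right (by have := hN12 k; omega) (by omega))
      exact_mod_cast this
    have hb := bound_mid (S := S k) (l := l k) (j := 8 * k + 11) (hS12 k) (hlpos k) ξ
      (by rw [← hNdef]; exact hk1) (by
        rw [← hNdef, show 8 * k + 11 = (8 * k + 10) + 1 by rfl, pow_succ (N k : ℝ)]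
        have : 0 < (N k : ℝ) ^ (8 * k + 10) := by positivity
        nlinarith)
    rw [← hNdef] at hb
    refine hb.trans ?_
    have hSpos : (0 : ℝ) < S k := by
      have := hS12 k
      exact_mod_cast (by omega : 0 < S k)
    have hlSr : (l k : ℝ) + 3 * ((8 * k + 11 : ℕ) : ℝ) ≤ S k := by exact_mod_cast hlS k
    calc ((l k : ℝ) + 3 * ((8 * k + 11 : ℕ) : ℝ)) / (S k : ℝ) ^ 2 ≤ S k / (S k : ℝ) ^ 2 := by
          gcongr
      _ = ((S k : ℝ))⁻¹ := by field_simp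
      _ = ((N k : ℝ) ^ (8 * k + 10)) ^ (-(1 / (4 * (8 * k + 10)) : ℝ)) := by
        rw [hNdef]
        push_cast
        rw [← pow_mul, ← Real.rpow_natCast, ← Real.rpow_mul hSpos.le, ← Real.rpow_neg_one]
        congr 1
        push_cast
        field_simp
      _ ≤ |ξ| ^ (-(1 / (4 * (8 * k + 10)) : ℝ)) := by
        apply Real.rpow_le_rpow_of_nonpos hξpos hRr
        have : (0 : ℝ) ≤ 1 / (4 * (8 * k + 10)) := by positivity
        linarith
  · -- low range for the next scale
    refine (hμF (k + 1) ξ).trans (le_trans ?_ (hg2 k _ hk1))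
    refine (bound_low (hN12 (k + 1)) (hlpos (k + 1)) ξ hξ0 hk2.le).trans ?_
    rw [Real.rpow_neg hξpos.le, ← Real.sqrt_eq_rpow]
    have h1 : (l (k + 1) : ℝ) ≤ √|ξ| := Real.le_sqrt_of_sq_le hge
    have h2 : 0 < √|ξ| := Real.sqrt_pos.2 hξpos
    have h3 : √|ξ| * √|ξ| = |ξ| := Real.mul_self_sqrt hξpos.le
    rw [div_le_iff₀ (by positivity), inv_mul_eq_div, le_div_iff₀ h2]
    nlinarith

theorem stmt2 (f : ℝ → ℝ)
    (hf_nonneg : ∀ ξ, 0 ≤ ξ → 0 ≤ f ξ)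
    (hf_bdd : ∃ B : ℝ, ∀ ξ, 0 ≤ ξ → f ξ ≤ B)
    (hf_reg : AntitoneOn f (Ici 0) ∨ ContinuousOn f (Ici 0))
    (hdecay : ∀ α > (0 : ℝ), ∀ ε > (0 : ℝ), ∃ M > (0 : ℝ),
      ∀ ξ, M ≤ ξ → ξ ^ (-α) ≤ ε * f ξ) :
    ∀ n : ℕ, 1 ≤ n →
      (∀ α > (0 : ℝ), ∀ ε > (0 : ℝ), ∃ M > (0 : ℝ),
        ∀ ξ, M ≤ ξ → ξ ^ (-α) ≤ ε * (f ξ) ^ n) ∧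
      ∃ μ : Measure ℝ, IsProbabilityMeasure μ ∧ μ {x : ℝ | Liouville x}ᶜ = 0 ∧
        ∃ C > (0 : ℝ), ∃ M' > (0 : ℝ),
          ∀ ξ : ℝ, M' ≤ |ξ| → ‖fourierT μ ξ‖ ≤ C * (f |ξ|) ^ n := by
  intro n hn
  have hn0 : (0 : ℝ) < n := by exact_mod_cast hn
  have key : ∀ α > (0 : ℝ), ∀ ε > (0 : ℝ), ∃ M > (0 : ℝ),
      ∀ ξ, M ≤ ξ → ξ ^ (-α) ≤ ε * (f ξ) ^ n := by
    intro α hα ε hε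
    obtain ⟨M, hM, h⟩ := hdecay (α / n) (by positivity) (ε ^ (1 / n : ℝ)) (by positivity)
    refine ⟨M, hM, fun ξ hξ => ?_⟩
    have hξ0 : 0 < ξ := hM.trans_le hξ
    have h1 := pow_le_pow_left₀ (Real.rpow_nonneg hξ0.le _) (h ξ hξ) n
    rw [mul_pow, ← Real.rpow_natCast, ← Real.rpow_natCast (ε ^ _), ← Real.rpow_mul hξ0.le,
      ← Real.rpow_mul hε.le, one_div_mul_cancel hn0.ne', Real.rpow_one] at h1
    have h2 : -(α / n) * n = -α := by field_simp
    rwa [h2] at h1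
  refine ⟨key, ?_⟩
  obtain ⟨μ, h1, h2, M', hM', h3⟩ := main_exists (fun ξ => f ξ ^ n) (fun α hα => by
    simpa using key α hα 1 one_pos)
  exact ⟨μ, h1, h2, 1, one_pos, M', hM', fun ξ hξ => by simpa using h3 ξ hξ⟩
end

section
/- Let μ be a nonzero finite Borel measure on ℝ with μ(ℝ \ 𝕃) = 0. Let g : ℝ → ℝ be even and 1-periodic with g(0) ≠ 0, and suppose there is a sequence (a_k)_{k≥0} of nonnegative reals such that for every ξ ∈ ℝ the partial sums S_N(ξ) = Σ_{k=0}^{N} a_k·cos(2πkξ) converge to g(ξ) as N → ∞. Then there exists a nonzero finite Borel measure ν on ℝ with ν(ℝ \ 𝕃) = 0 such that ν̂(ξ) = g(ξ)·μ̂(ξ) for all ξ ∈ ℝ; in particular, if |μ̂(ξ)| ≤ C·f(|ξ|) for all |ξ| ≥ M, then |ν̂(ξ)| ≤ C·|g(ξ)|·f(|ξ|) for all |ξ| ≥ M. -/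
open MeasureTheory Filter Set

theorem liouville_add_int {x : ℝ} (h : Liouville x) (m : ℤ) : Liouville (x + m) := by
  intro n
  obtain ⟨p, q, hq, hne, hlt⟩ := h n
  have hq0 : (q : ℝ) ≠ 0 := by
    have : q ≠ 0 := by omega
    exact_mod_cast this
  have e : (((p + m * q : ℤ)) : ℝ) / q = p / q + m := by
    push_cast
    field_simp
  refine ⟨p + m * q, q, hq, ?_, ?_⟩
  · rw [e]
    intro h'
    exact hne (by linarith)
  · rw [e]
    have : x + (m : ℝ) - ((p : ℝ) / q + m) = x - p / q := by ring
    rw [abs_sub_comm] at *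
    simpa [Real.dist_eq, abs_sub_comm, this] using hlt

theorem integrable_char (ν : Measure ℝ) [IsFiniteMeasure ν] (ξ : ℝ) :
    Integrable (fun x : ℝ => Complex.exp (((-2 * Real.pi * ξ * x : ℝ) : ℂ) * Complex.I)) ν := by
  refine Integrable.of_bound (C := 1) ?_ ?_
  · exact Continuous.aestronglyMeasurable (by fun_prop)
  · exact Eventually.of_forall fun x => by rw [Complex.norm_exp_ofReal_mul_I]

/-- The symmetrized translate of a measure by `k`. -/
noncomputable def symTr (μ : Measure ℝ) (k : ℕ) : Measure ℝ :=
  μ.map (fun x => x + ((k : ℤ) : ℝ)) + μ.map (fun x => x + ((-(k : ℤ) : ℤ) : ℝ))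

instance symTr_finite (μ : Measure ℝ) [IsFiniteMeasure μ] (k : ℕ) :
    IsFiniteMeasure (symTr μ k) := by
  unfold symTr
  infer_instance

theorem symTr_univ (μ : Measure ℝ) (k : ℕ) : symTr μ k univ = 2 * μ univ := by
  unfold symTr
  rw [Measure.add_apply, Measure.map_apply (by fun_prop) MeasurableSet.univ,
    Measure.map_apply (by fun_prop) MeasurableSet.univ]
  simp [two_mul]

theorem symTr_null (μ : Measure ℝ) (hμL : μ {x : ℝ | Liouville x}ᶜ = 0) (k : ℕ) :
    symTr μ k {x : ℝ | Liouville x}ᶜ = 0 := by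
  have hm : MeasurableSet {x : ℝ | Liouville x}ᶜ := IsGδ.setOfPred_liouville.measurableSet.compl
  have key : ∀ m : ℤ, μ.map (fun x => x + (m : ℝ)) {x : ℝ | Liouville x}ᶜ = 0 := by
    intro m
    rw [Measure.map_apply (by fun_prop) hm]
    refine measure_mono_null ?_ hμL
    intro x hx hl
    exact hx (liouville_add_int hl m)
  unfold symTr
  rw [Measure.add_apply, key, key, add_zero]

theorem fourierT_map (μ : Measure ℝ) (ξ : ℝ) (m : ℝ) :
    fourierT (μ.map (fun x => x + m)) ξ =
      Complex.exp (((-2 * Real.pi * ξ * m : ℝ) : ℂ) * Complex.I) * fourierT μ ξ := by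
  unfold fourierT
  rw [integral_map (by fun_prop) (Continuous.aestronglyMeasurable (by fun_prop)),
    ← integral_const_mul]
  congr 1
  ext x
  rw [← Complex.exp_add]
  congr 1
  push_cast
  ring

theorem fourierT_symTr (μ : Measure ℝ) [IsFiniteMeasure μ] (ξ : ℝ) (k : ℕ) :
    fourierT (symTr μ k) ξ = 2 * (Real.cos (2 * Real.pi * k * ξ) : ℂ) * fourierT μ ξ := by
  have h : fourierT (symTr μ k) ξ = fourierT (μ.map (fun x => x + ((k : ℤ) : ℝ))) ξ
      + fourierT (μ.map (fun x => x + ((-(k : ℤ) : ℤ) : ℝ))) ξ := by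
    unfold fourierT symTr
    exact integral_add_measure (integrable_char _ ξ) (integrable_char _ ξ)
  rw [h, fourierT_map, fourierT_map, ← add_mul, Complex.ofReal_cos, Complex.two_cos, add_comm]
  congr 3
  · congr 1
    push_cast
    ring
  · congr 1
    push_cast
    ring

theorem stmt5 (μ : Measure ℝ) [IsFiniteMeasure μ] (hμ_ne : μ ≠ 0)
    (hμL : μ {x : ℝ | Liouville x}ᶜ = 0)
    (g : ℝ → ℝ)
    (hg_even : ∀ x, g (-x) = g x)
    (hg_per : ∀ x, g (x + 1) = g x)
    (hg0 : g 0 ≠ 0)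
    (a : ℕ → ℝ) (ha_nonneg : ∀ k, 0 ≤ a k)
    (ha_conv : ∀ ξ : ℝ, Tendsto
      (fun N : ℕ => ∑ k ∈ Finset.range (N + 1), a k * Real.cos (2 * Real.pi * k * ξ))
      atTop (nhds (g ξ))) :
    ∃ ν : Measure ℝ, ν ≠ 0 ∧ IsFiniteMeasure ν ∧ ν {x : ℝ | Liouville x}ᶜ = 0 ∧
      (∀ ξ : ℝ, fourierT ν ξ = (g ξ : ℂ) * fourierT μ ξ) ∧
      ∀ (f : ℝ → ℝ) (C M : ℝ),
        (∀ ξ : ℝ, M ≤ |ξ| → ‖fourierT μ ξ‖ ≤ C * f |ξ|) →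
        ∀ ξ : ℝ, M ≤ |ξ| → ‖fourierT ν ξ‖ ≤ C * |g ξ| * f |ξ| := by
  have hsum : Summable a := by
    have h0 := ha_conv 0
    simp only [mul_zero, Real.cos_zero, mul_one] at h0
    have h1 := (tendsto_add_atTop_iff_nat (f := fun N => ∑ k ∈ Finset.range N, a k) 1).1 h0
    exact ((hasSum_iff_tendsto_nat_of_nonneg ha_nonneg _).2 h1).summable
  let ν : Measure ℝ := Measure.sum fun k : ℕ => ENNReal.ofReal (a k / 2) • symTr μ k
  have hfin : IsFiniteMeasure ν := by
    constructor
    have : ν univ = (∑' k, ENNReal.ofReal (a k / 2)) * (2 * μ univ) := by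
      simp only [ν, Measure.sum_apply _ MeasurableSet.univ, Measure.smul_apply, symTr_univ,
        smul_eq_mul, ENNReal.tsum_mul_right]
    rw [this]
    refine ENNReal.mul_lt_top ?_ (ENNReal.mul_lt_top (by simp) (measure_lt_top _ _))
    exact (hsum.div_const 2).tsum_ofReal_lt_top
  have hF : ∀ ξ : ℝ, fourierT ν ξ = (g ξ : ℂ) * fourierT μ ξ := by
    intro ξ
    have hs := hasSum_integral_measure (integrable_char ν ξ)
    have hterm : ∀ k : ℕ, (∫ x, Complex.exp (((-2 * Real.pi * ξ * x : ℝ) : ℂ) * Complex.I)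
        ∂(ENNReal.ofReal (a k / 2) • symTr μ k)) =
        ((a k * Real.cos (2 * Real.pi * k * ξ) : ℝ) : ℂ) * fourierT μ ξ := by
      intro k
      have h2 := fourierT_symTr μ ξ k
      rw [integral_smul_measure]
      unfold fourierT at h2 ⊢
      rw [h2, ENNReal.toReal_ofReal (by have := ha_nonneg k; positivity), Complex.real_smul]
      push_cast
      ring
    simp only [hterm] at hs
    have t1 := (tendsto_add_atTop_iff_nat 1).2 hs.tendsto_sum_nat
    have t2 := ((Complex.continuous_ofReal.tendsto _).comp (ha_conv ξ)).mul_const (fourierT μ ξ)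
    refine tendsto_nhds_unique t1 (t2.congr fun N => ?_)
    simp only [Function.comp, Complex.ofReal_sum, Finset.sum_mul]
  refine ⟨ν, ?_, hfin, ?_, hF, ?_⟩
  · intro h0
    have h := hF 0
    rw [h0] at h
    simp only [fourierT, integral_zero_measure] at h
    have h' := h.symm
    simp [hg0, measureReal_def, ENNReal.toReal_eq_zero_iff, hμ_ne] at h'
  · have hm : MeasurableSet {x : ℝ | Liouville x}ᶜ := IsGδ.setOfPred_liouville.measurableSet.compl
    simp [ν, Measure.sum_apply _ hm, symTr_null μ hμL]
  · intro f C M h ξ hξ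
    rw [hF, norm_mul, Complex.norm_real, Real.norm_eq_abs]
    calc |g ξ| * ‖fourierT μ ξ‖ ≤ |g ξ| * (C * f |ξ|) :=
          mul_le_mul_of_nonneg_left (h ξ hξ) (abs_nonneg _)
      _ = C * |g ξ| * f |ξ| := by ring
end

section
/- Let f : [0,∞) → ℝ satisfy 0 < f(ξ) ≤ 1/2 for all ξ, and suppose the function φ(γ) = −log f(e^γ) is concave on [0,∞). Then exactly one of the following holds: (a) for every α > 0 and every ε > 0 there exists M > 0 with ξ^(−α) ≤ ε·f(ξ) for all ξ ≥ M; or (b) there exist α₀ > 0, c > 0, M > 0 with c·f(ξ) ≤ ξ^(−α₀) for all ξ ≥ M. -/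
open Filter Set

theorem stmt6 (f : ℝ → ℝ)
    (hf : ∀ ξ, 0 ≤ ξ → 0 < f ξ ∧ f ξ ≤ 1 / 2)
    (hφ_concave : ConcaveOn ℝ (Ici 0) (fun γ : ℝ => -Real.log (f (Real.exp γ)))) :
    ((∀ α > (0 : ℝ), ∀ ε > (0 : ℝ), ∃ M > (0 : ℝ),
        ∀ ξ, M ≤ ξ → ξ ^ (-α) ≤ ε * f ξ) ∨
     (∃ α₀ > (0 : ℝ), ∃ c > (0 : ℝ), ∃ M > (0 : ℝ),
        ∀ ξ, M ≤ ξ → c * f ξ ≤ ξ ^ (-α₀))) ∧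
    ¬ ((∀ α > (0 : ℝ), ∀ ε > (0 : ℝ), ∃ M > (0 : ℝ),
        ∀ ξ, M ≤ ξ → ξ ^ (-α) ≤ ε * f ξ) ∧
       (∃ α₀ > (0 : ℝ), ∃ c > (0 : ℝ), ∃ M > (0 : ℝ),
        ∀ ξ, M ≤ ξ → c * f ξ ≤ ξ ^ (-α₀))) := by
  refine ⟨?_, ?_⟩
  · by_cases h : ∃ β > (0 : ℝ), ∀ γ, 0 ≤ γ → β * γ ≤ -Real.log (f (Real.exp γ))
    · right
      obtain ⟨β, hβ, h⟩ := h
      refine ⟨β, hβ, 1, one_pos, 1, one_pos, fun ξ hξ => ?_⟩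
      have hpos : 0 < ξ := by linarith
      have h1 := h (Real.log ξ) (Real.log_nonneg hξ)
      rw [Real.exp_log hpos] at h1
      rw [one_mul, Real.rpow_def_of_pos hpos, ← Real.exp_log (hf ξ hpos.le).1, Real.exp_le_exp]
      linarith
    · left
      intro α hα ε hε
      push Not at h
      obtain ⟨γ₀, hγ₀, h0⟩ := h (α / 2) (by positivity)
      have hnn : ∀ γ : ℝ, 0 < -Real.log (f (Real.exp γ)) := by
        intro γ
        obtain ⟨p, q⟩ := hf (Real.exp γ) (Real.exp_pos γ).le
        have := Real.log_neg p (by linarith)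
        linarith
      have hγp : 0 < γ₀ := by
        have := hnn γ₀
        by_contra hc
        have : γ₀ = 0 := by linarith
        subst this
        linarith
      refine ⟨Real.exp (max γ₀ (-(2 * Real.log ε / α))), Real.exp_pos _, fun ξ hξ => ?_⟩
      have hpos : 0 < ξ := lt_of_lt_of_le (Real.exp_pos _) hξ
      have hl := (Real.le_log_iff_exp_le hpos).2 hξ
      have hl1 := (le_max_left _ _).trans hl
      have hl2 := (le_max_right _ _).trans hl
      have hlp : 0 < Real.log ξ := lt_of_lt_of_le hγp hl1
      have ht : γ₀ / Real.log ξ ≤ 1 := by rw [div_le_one hlp]; exact hl1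
      have hc := hφ_concave.2 (show (0 : ℝ) ∈ Ici 0 by simp)
        (show Real.log ξ ∈ Ici (0 : ℝ) from hlp.le)
        (show 0 ≤ 1 - γ₀ / Real.log ξ by linarith)
        (show 0 ≤ γ₀ / Real.log ξ by positivity) (by ring)
      have e : (1 - γ₀ / Real.log ξ) • (0 : ℝ) + (γ₀ / Real.log ξ) • Real.log ξ = γ₀ := by
        simp only [smul_eq_mul]; field_simp; ring
      simp only [e] at hc
      rw [Real.exp_log hpos] at hc
      simp only [smul_eq_mul] at hc
      have h2 : 0 ≤ (1 - γ₀ / Real.log ξ) * -Real.log (f (Real.exp 0)) :=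
        mul_nonneg (by linarith) (hnn 0).le
      have h3 : γ₀ / Real.log ξ * -Real.log (f ξ) ≤ α / 2 * γ₀ := by linarith
      have h4 : -Real.log (f ξ) ≤ α / 2 * Real.log ξ := by
        rw [div_mul_eq_mul_div, div_le_iff₀ hlp] at h3
        nlinarith
      have h5 : -(2 * Real.log ε) ≤ Real.log ξ * α := by
        rw [← neg_div, div_le_iff₀ hα] at hl2
        exact hl2
      have hfp := (hf ξ hpos.le).1
      rw [Real.rpow_def_of_pos hpos, ← Real.exp_log (mul_pos hε hfp), Real.exp_le_exp,
        Real.log_mul hε.ne' hfp.ne']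
      linarith
  · rintro ⟨ha, α, hα, c, hc, M, hM, hb⟩
    obtain ⟨N, hN, ha⟩ := ha α hα (c / 2) (by positivity)
    have h1 := ha (max M N) (le_max_right _ _)
    have h2 := hb (max M N) (le_max_left _ _)
    have h3 := mul_pos hc (hf (max M N) (hM.le.trans (le_max_left _ _))).1
    linarith
end

section
/- Let f : [0,∞) → ℝ be antitone with 0 < f(ξ) ≤ 1/2 for all ξ, and suppose f is not constant on [1,∞). If the function φ(γ) = −log f(e^γ) is convex on [0,∞), then there is no Borel probability measure μ on ℝ with μ(ℝ \ 𝕃) = 0 for which there exist C > 0, M > 0 with |μ̂(ξ)| ≤ C·f(|ξ|) for all |ξ| ≥ M. -/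
open MeasureTheory Filter Set

lemma fourierT_le_one (μ : Measure ℝ) [IsProbabilityMeasure μ] (ξ : ℝ) : ‖fourierT μ ξ‖ ≤ 1 := by
  unfold fourierT
  refine (norm_integral_le_integral_norm _).trans ?_
  simp only [Complex.norm_exp_ofReal_mul_I]
  simp

/-- The Gaussian average of the Fourier transform. -/
lemma gauss_swap (μ : Measure ℝ) [IsProbabilityMeasure μ] (x r : ℝ) (hr : 0 < r) :
    ∫ ξ : ℝ, (Real.exp (-r ^ 2 * ξ ^ 2) : ℂ) *
        (Complex.exp (((2 * Real.pi * ξ * x : ℝ) : ℂ) * Complex.I) * fourierT μ ξ)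
      = ((∫ y, (Real.sqrt Real.pi / r) * Real.exp (-(Real.pi * (y - x) / r) ^ 2) ∂μ : ℝ) : ℂ) := by
  have hint : Integrable (Function.uncurry fun (ξ y : ℝ) => (Real.exp (-r ^ 2 * ξ ^ 2) : ℂ) *
        Complex.exp (((-2 * Real.pi * ξ * (y - x) : ℝ) : ℂ) * Complex.I)) (volume.prod μ) := by
    have h1 : Integrable (fun ξ : ℝ => Real.exp (-r ^ 2 * ξ ^ 2)) :=
      integrable_exp_neg_mul_sq (by positivity)
    have h2 := h1.comp_fst μ
    refine h2.mono' (by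
      apply Continuous.aestronglyMeasurable
      unfold Function.uncurry
      fun_prop) ?_
    refine Eventually.of_forall fun p => ?_
    simp only [Function.uncurry, norm_mul, Complex.norm_exp_ofReal_mul_I, mul_one,
      Complex.norm_real, Real.norm_eq_abs, Real.abs_exp, le_refl]
  have hsw := integral_integral_swap hint
  have hL : ∀ ξ : ℝ, ∫ y, (Real.exp (-r ^ 2 * ξ ^ 2) : ℂ) *
        Complex.exp (((-2 * Real.pi * ξ * (y - x) : ℝ) : ℂ) * Complex.I) ∂μ
      = (Real.exp (-r ^ 2 * ξ ^ 2) : ℂ) *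
        (Complex.exp (((2 * Real.pi * ξ * x : ℝ) : ℂ) * Complex.I) * fourierT μ ξ) := by
    intro ξ
    rw [integral_const_mul]
    congr 1
    rw [fourierT, ← integral_const_mul]
    refine integral_congr_ae (Eventually.of_forall fun y => ?_)
    dsimp only
    rw [← Complex.exp_add]
    congr 1
    push_cast
    ring
  have hR : ∀ y : ℝ, ∫ ξ : ℝ, (Real.exp (-r ^ 2 * ξ ^ 2) : ℂ) *
        Complex.exp (((-2 * Real.pi * ξ * (y - x) : ℝ) : ℂ) * Complex.I)
      = (((Real.sqrt Real.pi / r) * Real.exp (-(Real.pi * (y - x) / r) ^ 2) : ℝ) : ℂ) := by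
    intro y
    have h := fourierIntegral_gaussian (b := ((r ^ 2 : ℝ) : ℂ))
      (by rw [Complex.ofReal_re]; positivity) ((-2 * Real.pi * (y - x) : ℝ) : ℂ)
    have e1 : (∫ ξ : ℝ, (Real.exp (-r ^ 2 * ξ ^ 2) : ℂ) *
        Complex.exp (((-2 * Real.pi * ξ * (y - x) : ℝ) : ℂ) * Complex.I)) =
        ∫ ξ : ℝ, Complex.exp (Complex.I * ((-2 * Real.pi * (y - x) : ℝ) : ℂ) * ξ) *
          Complex.exp (-((r ^ 2 : ℝ) : ℂ) * (ξ : ℂ) ^ 2) := by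
      congr 1
      ext ξ
      rw [mul_comm]
      push_cast
      congr 2
      ring
    rw [e1, h]
    have e2 : ((Real.pi : ℂ) / ((r ^ 2 : ℝ) : ℂ)) ^ (1 / 2 : ℂ)
        = ((Real.sqrt Real.pi / r : ℝ) : ℂ) := by
      have : Real.sqrt Real.pi / r = (Real.pi / r ^ 2) ^ (1 / 2 : ℝ) := by
        rw [← Real.sqrt_eq_rpow, Real.sqrt_div' _ (by positivity), Real.sqrt_sq hr.le]
      rw [this, Complex.ofReal_cpow (by positivity)]
      push_cast
      rfl
    rw [e2]
    have hr' : (r : ℂ) ≠ 0 := by exact_mod_cast hr.ne'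
    push_cast
    congr 2
    field_simp
    ring
  simp only [hL, hR] at hsw
  rw [hsw, integral_complex_ofReal]

lemma small_ball (μ : Measure ℝ) [IsProbabilityMeasure μ] (x r T B : ℝ) (hr : 0 < r) (hT : 0 < T)
    (hB0 : 0 ≤ B) (hB : ∀ ξ, T ≤ |ξ| → ‖fourierT μ ξ‖ ≤ B) :
    μ.real {y | |y - x| < r} ≤ 2 * Real.exp (Real.pi ^ 2) * (r * T + B) := by
  have hg : Integrable (fun ξ : ℝ => Real.exp (-r ^ 2 * ξ ^ 2)) :=
      integrable_exp_neg_mul_sq (by positivity)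
  have hind : Integrable (indicator (Icc (-T) T) (fun _ : ℝ => (1 : ℝ))) :=
    (integrable_indicator_iff measurableSet_Icc).2 (by simp)
  -- upper bound
  have hup : ∫ y, (Real.sqrt Real.pi / r) * Real.exp (-(Real.pi * (y - x) / r) ^ 2) ∂μ
      ≤ 2 * T + B * (Real.sqrt Real.pi / r) := by
    have h1 := gauss_swap μ x r hr
    have h2 := norm_integral_le_of_norm_le (hind.add (hg.const_mul B))
      (f := fun ξ : ℝ => (Real.exp (-r ^ 2 * ξ ^ 2) : ℂ) *
        (Complex.exp (((2 * Real.pi * ξ * x : ℝ) : ℂ) * Complex.I) * fourierT μ ξ))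
      (Eventually.of_forall fun ξ => by
        simp only [norm_mul, Complex.norm_exp_ofReal_mul_I, one_mul,
          Complex.norm_real, Real.norm_eq_abs, Real.abs_exp, Pi.add_apply]
        by_cases h : |ξ| ≤ T
        · rw [indicator_of_mem (by rwa [mem_Icc, ← abs_le])]
          have e1 : Real.exp (-r ^ 2 * ξ ^ 2) ≤ 1 := Real.exp_le_one_iff.2 (by
            have : 0 ≤ r ^ 2 * ξ ^ 2 := by positivity
            linarith)
          have e2 := fourierT_le_one μ ξ
          have : 0 ≤ B * Real.exp (-r ^ 2 * ξ ^ 2) := by positivity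
          have := mul_le_one₀ e1 (norm_nonneg _) e2
          linarith
        · rw [indicator_of_notMem (by rwa [mem_Icc, ← abs_le]), zero_add, mul_comm B]
          gcongr
          exact hB ξ (not_le.1 h).le)
    rw [h1, Complex.norm_real] at h2
    refine (le_abs_self _).trans (h2.trans (le_of_eq ?_))
    have := integral_add hind (hg.const_mul B)
    simp only [Pi.add_apply]
    rw [this, integral_const_mul, integral_gaussian, integral_indicator measurableSet_Icc,
      Real.sqrt_div' _ (by positivity), Real.sqrt_sq hr.le]
    simp [hT.le]
    ring
  -- lower bound
  have hms : MeasurableSet {y : ℝ | |y - x| < r} := by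
    apply IsOpen.measurableSet
    apply isOpen_lt <;> fun_prop
  have hlow : μ.real {y | |y - x| < r} * ((Real.sqrt Real.pi / r) * Real.exp (-Real.pi ^ 2)) ≤
      ∫ y, (Real.sqrt Real.pi / r) * Real.exp (-(Real.pi * (y - x) / r) ^ 2) ∂μ := by
    rw [← smul_eq_mul, ← integral_indicator_const _ hms]
    apply integral_mono_of_nonneg
    · exact Eventually.of_forall fun y => indicator_nonneg (fun _ _ => by positivity) _
    · refine Integrable.mono' (integrable_const (Real.sqrt Real.pi / r))
        (by apply Continuous.aestronglyMeasurable; fun_prop) (Eventually.of_forall fun y => ?_)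
      rw [Real.norm_of_nonneg (by positivity)]
      refine mul_le_of_le_one_right (by positivity) (Real.exp_le_one_iff.2 ?_)
      have := sq_nonneg (Real.pi * (y - x) / r)
      linarith
    · refine Eventually.of_forall fun y => ?_
      apply indicator_le' (s := {y : ℝ | |y - x| < r}) (f := fun _ => _)
        (g := fun y => (Real.sqrt Real.pi / r) * Real.exp (-(Real.pi * (y - x) / r) ^ 2))
      · intro y hy
        refine mul_le_mul_of_nonneg_left (Real.exp_le_exp.2 (neg_le_neg ?_)) (by positivity)
        change |y - x| < r at hy
        rw [mul_div_assoc, mul_pow]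
        refine mul_le_of_le_one_right (by positivity) ?_
        rw [sq_le_one_iff_abs_le_one, abs_div, abs_of_pos hr, div_le_one hr]
        exact hy.le
      · intro y _
        positivity
  have hpi : 1 ≤ Real.sqrt Real.pi := by
    rw [Real.one_le_sqrt]
    linarith [Real.pi_gt_three]
  have h3 := hlow.trans hup
  set m := μ.real {y | |y - x| < r}
  set s := Real.sqrt Real.pi
  rw [Real.exp_neg] at h3
  have hE := Real.exp_pos (Real.pi ^ 2)
  set E := Real.exp (Real.pi ^ 2)
  have h4 : m * s ≤ (2 * T * r + B * s) * E := by
    have := mul_le_mul_of_nonneg_right h3 (by positivity : 0 ≤ r * E)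
    have e : m * (s / r * E⁻¹) * (r * E) = m * s := by field_simp
    have e' : (2 * T + B * (s / r)) * (r * E) = (2 * T * r + B * s) * E := by field_simp
    rw [e, e'] at this
    exact this
  have h5 : (2 * T * r + B * s) * E ≤ (2 * E * (r * T + B)) * s := by
    have a1 : 0 ≤ T * r * E * (s - 1) := mul_nonneg (by positivity) (by linarith)
    have a2 : 0 ≤ B * E * s := by positivity
    nlinarith
  exact le_of_mul_le_mul_right (h4.trans h5) (by linarith)

lemma decay (f : ℝ → ℝ)
    (hf_anti : AntitoneOn f (Ici 0))
    (hf : ∀ ξ, 0 ≤ ξ → 0 < f ξ ∧ f ξ ≤ 1 / 2)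
    (hf_nonconst : ∃ ξ₁ ξ₂ : ℝ, 1 ≤ ξ₁ ∧ 1 ≤ ξ₂ ∧ f ξ₁ ≠ f ξ₂)
    (hφ_convex : ConvexOn ℝ (Ici 0) (fun γ : ℝ => -Real.log (f (Real.exp γ)))) :
    ∃ c > (0 : ℝ), ∃ A > (0 : ℝ), ∃ N ≥ (1 : ℝ), ∀ ξ, N < ξ → f ξ ≤ A * ξ ^ (-c) := by
  obtain ⟨a, b, ha, hb, hab, hfab⟩ : ∃ a b : ℝ, 1 ≤ a ∧ 1 ≤ b ∧ a < b ∧ f b < f a := by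
    obtain ⟨a, b, ha, hb, hne⟩ := hf_nonconst
    rcases lt_trichotomy a b with h | h | h
    · exact ⟨a, b, ha, hb, h, lt_of_le_of_ne
        (hf_anti (mem_Ici.2 (by linarith)) (mem_Ici.2 (by linarith)) h.le) hne.symm⟩
    · exact absurd (by rw [h]) hne
    · exact ⟨b, a, hb, ha, h, lt_of_le_of_ne
        (hf_anti (mem_Ici.2 (by linarith)) (mem_Ici.2 (by linarith)) h.le) hne⟩
  have ha0 : 0 < a := by linarith
  have hb0 : 0 < b := by linarith
  have hlab := Real.log_lt_log ha0 hab
  have hlf := Real.log_lt_log (hf b hb0.le).1 hfab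
  refine ⟨(Real.log (f a) - Real.log (f b)) / (Real.log b - Real.log a),
    div_pos (by linarith) (by linarith), ?_⟩
  set c := (Real.log (f a) - Real.log (f b)) / (Real.log b - Real.log a) with hc
  refine ⟨Real.exp (Real.log (f b) + c * Real.log b), Real.exp_pos _, b, hb, fun ξ hξ => ?_⟩
  have hξ0 : 0 < ξ := by linarith
  have hl := Real.log_lt_log hb0 hξ
  have h := hφ_convex.slope_mono_adjacent (x := Real.log a) (y := Real.log b) (z := Real.log ξ)
    (Real.log_nonneg ha) (Real.log_nonneg (by linarith)) hlab hl
  simp only [Real.exp_log ha0, Real.exp_log hb0, Real.exp_log hξ0] at h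
  have h' : c ≤ (-Real.log (f ξ) - -Real.log (f b)) / (Real.log ξ - Real.log b) := by
    refine le_trans (le_of_eq ?_) h
    rw [hc]; congr 1; ring
  rw [le_div_iff₀ (by linarith)] at h'
  rw [Real.rpow_def_of_pos hξ0, ← Real.exp_add, ← Real.log_le_iff_le_exp (hf ξ hξ0.le).1]
  nlinarith

theorem stmt8 (f : ℝ → ℝ)
    (hf_anti : AntitoneOn f (Ici 0))
    (hf : ∀ ξ, 0 ≤ ξ → 0 < f ξ ∧ f ξ ≤ 1 / 2)
    (hf_nonconst : ∃ ξ₁ ξ₂ : ℝ, 1 ≤ ξ₁ ∧ 1 ≤ ξ₂ ∧ f ξ₁ ≠ f ξ₂)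
    (hφ_convex : ConvexOn ℝ (Ici 0) (fun γ : ℝ => -Real.log (f (Real.exp γ)))) :
    ¬ ∃ μ : Measure ℝ, IsProbabilityMeasure μ ∧ μ {x : ℝ | Liouville x}ᶜ = 0 ∧
      ∃ C > (0 : ℝ), ∃ M > (0 : ℝ),
        ∀ ξ : ℝ, M ≤ |ξ| → ‖fourierT μ ξ‖ ≤ C * f |ξ| := by
  rintro ⟨μ, hμ, hL, C, hC, M, hM, hdec⟩
  obtain ⟨c, hc, A, hA, N, hN, hfd⟩ := decay f hf_anti hf hf_nonconst hφ_convex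
  -- global decay
  obtain ⟨D, hD, hdecay⟩ : ∃ D > (0 : ℝ), ∀ ξ : ℝ, 1 ≤ |ξ| → ‖fourierT μ ξ‖ ≤ D * |ξ| ^ (-c) := by
    refine ⟨C * A + (M + N) ^ c, by positivity, fun ξ hξ => ?_⟩
    have hξ0 : 0 < |ξ| := by linarith
    have hp : 0 < |ξ| ^ (-c) := Real.rpow_pos_of_pos hξ0 _
    have hp2 : 0 < (M + N) ^ c := by positivity
    rw [add_mul]
    by_cases h : |ξ| ≤ M + N
    · have h1 : 1 ≤ (M + N) ^ c * |ξ| ^ (-c) := by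
        rw [Real.rpow_neg hξ0.le, ← div_eq_mul_inv, one_le_div (by positivity)]
        exact Real.rpow_le_rpow hξ0.le h hc.le
      have := fourierT_le_one μ ξ
      have : 0 < C * A * |ξ| ^ (-c) := by positivity
      linarith
    · have h1 := hdec ξ (by linarith)
      have h2 := mul_le_mul_of_nonneg_left (hfd |ξ| (by linarith)) hC.le
      have : 0 < (M + N) ^ c * |ξ| ^ (-c) := by positivity
      rw [← mul_assoc] at h2
      linarith
  obtain ⟨k, hk⟩ := exists_nat_gt (3 / c)
  have hkc : 3 ≤ k * c := by
    rw [div_lt_iff₀ hc] at hk; exact hk.le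
  set K := 2 * Real.exp (Real.pi ^ 2) * (1 + D) with hK
  have hK0 : 0 < K := by positivity
  have hball : ∀ b : ℕ, 1 ≤ b → ∀ x : ℝ,
      μ.real {y | |y - x| < 1 / (b : ℝ) ^ (k + 3)} ≤ K / (b : ℝ) ^ 3 := by
    intro b hb x
    have hb1 : (1 : ℝ) ≤ b := by exact_mod_cast hb
    have hb0 : (0 : ℝ) < b := by linarith
    have := small_ball μ x (1 / (b : ℝ) ^ (k + 3)) ((b : ℝ) ^ k) (D / (b : ℝ) ^ 3)
      (by positivity) (by positivity) (by positivity) (fun ξ hξ => by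
        have h1 : 1 ≤ |ξ| := (one_le_pow₀ hb1).trans hξ
        refine (hdecay ξ h1).trans ?_
        rw [div_eq_mul_inv, Real.rpow_neg (by linarith)]
        gcongr
        calc (b : ℝ) ^ 3 = (b : ℝ) ^ (3 : ℝ) := by norm_cast
          _ ≤ (b : ℝ) ^ (k * c) := Real.rpow_le_rpow_of_exponent_le hb1 hkc
          _ = ((b : ℝ) ^ k) ^ c := by rw [Real.rpow_mul hb0.le, Real.rpow_natCast]
          _ ≤ |ξ| ^ c := Real.rpow_le_rpow (by positivity) hξ hc.le)
    refine this.trans (le_of_eq ?_)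
    rw [hK, pow_add]
    field_simp
  -- sets
  have hzero : ∀ R : ℕ, μ {x : ℝ | |x| ≤ R ∧ Liouville x} = 0 := by
    intro R
    let S : ℕ → Set ℝ := fun b => {x | |x| ≤ R ∧ 1 ≤ b ∧ ∃ a : ℤ, |x - a / b| < 1 / (b : ℝ) ^ (k + 3)}
    have hS : ∀ b, μ (S b) ≤ ENNReal.ofReal ((2 * R + 3) * K * (1 / (b : ℝ) ^ 2)) := by
      intro b
      rcases Nat.eq_zero_or_pos b with rfl | hb
      · have : S 0 = ∅ := by ext x; simp [S]
        rw [this]; simp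
      have hb1 : (1 : ℝ) ≤ b := by exact_mod_cast hb
      have hb0 : (0 : ℝ) < b := by linarith
      have hsub : S b ⊆ ⋃ a ∈ Finset.Icc (-((R + 1) * b : ℤ)) ((R + 1) * b : ℤ),
          {y : ℝ | |y - (a : ℝ) / b| < 1 / (b : ℝ) ^ (k + 3)} := by
        rintro x ⟨hx, -, a, ha⟩
        simp only [mem_iUnion]
        refine ⟨a, ?_, ha⟩
        rw [Finset.mem_Icc, ← abs_le]
        have h1 : 1 / (b : ℝ) ^ (k + 3) ≤ 1 := by
          rw [div_le_one (by positivity)]; exact one_le_pow₀ hb1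
        have h2 : |(a : ℝ) / b| ≤ R + 1 := by
          have := abs_sub_abs_le_abs_sub ((a : ℝ) / b) x
          rw [abs_sub_comm] at this
          linarith
        rw [abs_div, abs_of_pos hb0, div_le_iff₀ hb0] at h2
        exact_mod_cast h2
      refine (measure_mono hsub).trans ((measure_biUnion_finset_le _ _).trans ?_)
      refine (Finset.sum_le_card_nsmul _ _ (ENNReal.ofReal (K / (b : ℝ) ^ 3)) ?_).trans ?_
      · intro a _
        rw [← ofReal_measureReal]
        exact ENNReal.ofReal_le_ofReal (hball b hb _)
      · rw [← ENNReal.ofReal_nsmul]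
        apply ENNReal.ofReal_le_ofReal
        rw [nsmul_eq_mul, Int.card_Icc]
        have hcard : ((((R + 1) * b + 1 - -((R + 1) * b) : ℤ).toNat : ℕ) : ℝ)
            ≤ (2 * R + 3) * b := by
          have : ((R + 1) * b + 1 - -((R + 1) * b) : ℤ).toNat = 2 * ((R + 1) * b) + 1 := by
            have h0 : (0 : ℤ) ≤ (R + 1) * b := by positivity
            zify
            rw [Int.toNat_of_nonneg (by linarith)]
            ring
          rw [this]
          push_cast
          nlinarith
        refine (mul_le_mul_of_nonneg_right hcard (by positivity)).trans (le_of_eq ?_)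
        field_simp
    have hsum : ∑' b, μ (S b) ≠ ⊤ := by
      have hs : Summable fun b : ℕ => (2 * R + 3) * K * (1 / (b : ℝ) ^ 2) :=
        (Real.summable_one_div_nat_pow.2 (by norm_num)).mul_left _
      exact ne_top_of_le_ne_top hs.tsum_ofReal_ne_top (ENNReal.tsum_le_tsum hS)
    refine measure_mono_null ?_ (measure_limsup_atTop_eq_zero hsum)
    rintro x ⟨hx, hxl⟩
    rw [limsup_eq_iInf_iSup_of_nat]
    simp only [iInf_eq_iInter, iSup_eq_iUnion, mem_iInter, mem_iUnion]
    intro n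
    obtain ⟨b, hb, a, -, hab⟩ := frequently_atTop.1 (hxl.frequently_exists_num (k + 3)) (n + 1)
    exact ⟨b, by omega, hx, by omega, a, hab⟩
  have hLz : μ {x : ℝ | Liouville x} = 0 := by
    refine measure_mono_null ?_ (measure_iUnion_null hzero)
    intro x hx
    obtain ⟨R, hR⟩ := exists_nat_ge |x|
    exact mem_iUnion.2 ⟨R, hR, hx⟩
  have huniv : μ univ = 0 := by
    rw [← union_compl_self {x : ℝ | Liouville x}]
    exact measure_union_null hLz hL
  simp at huniv
end

section
/- Let f : [0,∞) → ℝ satisfy 0 < f(ξ) < 1/2 for all ξ, and suppose there exists ξ₀ > 0 such that f(ξ^λ) ≥ f(ξ)^λ for all ξ ≥ ξ₀ and all λ ≥ 1. Then exactly one of the following holds: (a) for every α > 0 and every ε > 0 there exists M > 0 with ξ^(−α) ≤ ε·f(ξ) for all ξ ≥ M; or (b) there exist α₀ > 0, c > 0, M > 0 with c·f(ξ) ≤ ξ^(−α₀) for all ξ ≥ M. -/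
open Filter Set

theorem stmt9 (f : ℝ → ℝ)
    (hf : ∀ ξ, 0 ≤ ξ → 0 < f ξ ∧ f ξ < 1 / 2)
    (hsub : ∃ ξ₀ > (0 : ℝ), ∀ ξ, ξ₀ ≤ ξ → ∀ lam : ℝ, 1 ≤ lam →
      (f ξ) ^ lam ≤ f (ξ ^ lam)) :
    ((∀ α > (0 : ℝ), ∀ ε > (0 : ℝ), ∃ M > (0 : ℝ),
        ∀ ξ, M ≤ ξ → ξ ^ (-α) ≤ ε * f ξ) ∨
     (∃ α₀ > (0 : ℝ), ∃ c > (0 : ℝ), ∃ M > (0 : ℝ),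
        ∀ ξ, M ≤ ξ → c * f ξ ≤ ξ ^ (-α₀))) ∧
    ¬ ((∀ α > (0 : ℝ), ∀ ε > (0 : ℝ), ∃ M > (0 : ℝ),
        ∀ ξ, M ≤ ξ → ξ ^ (-α) ≤ ε * f ξ) ∧
       (∃ α₀ > (0 : ℝ), ∃ c > (0 : ℝ), ∃ M > (0 : ℝ),
        ∀ ξ, M ≤ ξ → c * f ξ ≤ ξ ^ (-α₀))) := by
  obtain ⟨x₀, hx₀, hsub⟩ := hsub
  constructor
  · by_cases P : ∀ β > (0 : ℝ), ∃ η, max x₀ 2 ≤ η ∧ η ^ (-β) ≤ f η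
    · left
      intro α hα ε hε
      obtain ⟨η, hη, hfη⟩ := P (α / 2) (by positivity)
      have h1 : x₀ ≤ η := le_trans (le_max_left _ _) hη
      have h2 : 2 ≤ η := le_trans (le_max_right _ _) hη
      have hev : ∀ᶠ ξ : ℝ in atTop, ξ ^ (-(α / 2)) < ε :=
        (tendsto_rpow_neg_atTop (by positivity : 0 < α / 2)).eventually (gt_mem_nhds hε)
      obtain ⟨N, hN⟩ := eventually_atTop.1 hev
      refine ⟨max N η, lt_of_lt_of_le (by linarith) (le_max_right _ _), ?_⟩
      intro ξ hξ
      have h3 : ξ ^ (-(α / 2)) < ε := hN ξ (le_trans (le_max_left _ _) hξ)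
      have h4 : η ≤ ξ := le_trans (le_max_right _ _) hξ
      have hη0 : 0 < η := by linarith
      have hξ0 : 0 < ξ := by linarith
      have hlog : 0 < Real.log η := Real.log_pos (by linarith)
      have hlam : 1 ≤ Real.log ξ / Real.log η := by
        rw [le_div_iff₀ hlog, one_mul]
        exact Real.log_le_log hη0 h4
      have hpow : η ^ (Real.log ξ / Real.log η) = ξ := by
        rw [Real.rpow_def_of_pos hη0, mul_div_cancel₀ _ hlog.ne', Real.exp_log hξ0]
      have h5 := hsub η h1 _ hlam
      rw [hpow] at h5
      have h6 : ξ ^ (-(α / 2)) ≤ f ξ := by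
        refine le_trans ?_ h5
        have h7 : (η ^ (-(α / 2))) ^ (Real.log ξ / Real.log η) ≤
            (f η) ^ (Real.log ξ / Real.log η) :=
          Real.rpow_le_rpow (by positivity) hfη (by linarith)
        rwa [← Real.rpow_mul hη0.le, mul_comm, Real.rpow_mul hη0.le, hpow] at h7
      have h8 : ξ ^ (-α) = ξ ^ (-(α / 2)) * ξ ^ (-(α / 2)) := by
        rw [← Real.rpow_add hξ0]
        congr 1
        ring
      rw [h8]
      exact mul_le_mul h3.le h6 (by positivity) hε.le
    · right
      push Not at P
      obtain ⟨β, hβ, h⟩ := P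
      refine ⟨β, hβ, 1, one_pos, max x₀ 2, lt_of_lt_of_le hx₀ (le_max_left _ _), ?_⟩
      intro ξ hξ
      rw [one_mul]
      exact (h ξ hξ).le
  · rintro ⟨ha, α, hα, c, hc, M, hM, hb⟩
    obtain ⟨N, hN, ha⟩ := ha α hα (c / 2) (by positivity)
    have h1 := ha (max M N) (le_max_right _ _)
    have h2 := hb (max M N) (le_max_left _ _)
    have h0 : 0 < max M N := lt_of_lt_of_le hM (le_max_left _ _)
    have h3 : 0 < (max M N) ^ (-α) := Real.rpow_pos_of_pos h0 _
    linarith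
end

section
/- Let f : [0,∞) → ℝ satisfy 0 < f(ξ) < 1/2 for all ξ, and suppose there exists ξ₀ > 0 such that f(ξ^λ) ≤ f(ξ)^λ for all ξ ≥ ξ₀ and all λ ≥ 1. Then there is no Borel probability measure μ on ℝ with μ(ℝ \ 𝕃) = 0 for which there exist C > 0, M > 0 with |μ̂(ξ)| ≤ C·f(|ξ|) for all |ξ| ≥ M. -/
open MeasureTheory Filter Set

lemma decay_aux (f : ℝ → ℝ)
    (hf : ∀ ξ, 0 ≤ ξ → 0 < f ξ ∧ f ξ < 1 / 2)
    (hsuper : ∃ ξ₀ > (0 : ℝ), ∀ ξ, ξ₀ ≤ ξ → ∀ lam : ℝ, 1 ≤ lam →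
      f (ξ ^ lam) ≤ (f ξ) ^ lam) :
    ∃ K > (1 : ℝ), ∃ c > (0 : ℝ), ∀ ξ, K ≤ ξ → f ξ ≤ ξ ^ (-c) := by
  obtain ⟨ξ₀, h0, h⟩ := hsuper
  set K := max ξ₀ 2 with hK
  have hK2 : 2 ≤ K := le_max_right _ _
  have hlK : 0 < Real.log K := Real.log_pos (by linarith)
  refine ⟨K, by linarith, Real.log 2 / Real.log K, div_pos (Real.log_pos (by norm_num)) hlK, ?_⟩
  intro ξ hξ
  have hξ0 : 0 < ξ := by linarith
  have hl : Real.log K ≤ Real.log ξ := Real.log_le_log (by linarith) hξ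
  have h1 := h K (le_max_left _ _) (Real.log ξ / Real.log K) (by rwa [le_div_iff₀ hlK, one_mul])
  have e1 : K ^ (Real.log ξ / Real.log K) = ξ := by
    rw [Real.rpow_def_of_pos (by linarith), mul_div_cancel₀ _ hlK.ne', Real.exp_log hξ0]
  rw [e1] at h1
  have hfK := hf K (by linarith)
  calc f ξ ≤ _ := h1
    _ ≤ (1/2 : ℝ) ^ (Real.log ξ / Real.log K) :=
        Real.rpow_le_rpow hfK.1.le hfK.2.le (div_nonneg (by linarith) hlK.le)
    _ = ξ ^ (-(Real.log 2 / Real.log K)) := by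
        rw [Real.rpow_def_of_pos hξ0, Real.rpow_def_of_pos (by norm_num)]
        congr 1
        rw [one_div, Real.log_inv]
        ring

lemma integrable_cos_aux (μ : Measure ℝ) [IsProbabilityMeasure μ] (ξ : ℝ) :
    Integrable (fun x : ℝ => Real.cos (2 * Real.pi * ξ * x)) μ := by
  refine Integrable.of_bound (C := 1) (by fun_prop) (Eventually.of_forall fun x => ?_)
  simpa using Real.abs_cos_le_one _

lemma integral_cos_aux (μ : Measure ℝ) [IsProbabilityMeasure μ] (ξ : ℝ) :
    ∫ x, Real.cos (2 * Real.pi * ξ * x) ∂μ ≤ ‖fourierT μ ξ‖ := by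
  have hint : Integrable (fun x : ℝ =>
      Complex.exp (((-2 * Real.pi * ξ * x : ℝ) : ℂ) * Complex.I)) μ := by
    refine Integrable.of_bound (C := 1) (by fun_prop) (Eventually.of_forall fun x => ?_)
    rw [Complex.norm_exp_ofReal_mul_I]
  have : ∫ x, Real.cos (2 * Real.pi * ξ * x) ∂μ = (fourierT μ ξ).re := by
    unfold fourierT
    have h := integral_re hint
    simp only [RCLike.re_to_complex] at h
    rw [← h]
    congr 1
    ext x
    rw [Complex.exp_ofReal_mul_I_re, ← Real.cos_neg]
    congr 1
    ring
  rw [this]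
  exact Complex.re_le_norm _

/-- Squared modulus of the exponential sum with frequencies `A * j`, `j < A`. -/
noncomputable def gsum (A : ℕ) (x : ℝ) : ℝ :=
  ∑ j ∈ Finset.range A, ∑ l ∈ Finset.range A,
    Real.cos (2 * Real.pi * ((A : ℝ) * ((j : ℝ) - l)) * x)

lemma gsum_eq (A : ℕ) (x : ℝ) : gsum A x =
    (∑ j ∈ Finset.range A, Real.cos (2 * Real.pi * (A * j * x))) ^ 2 +
    (∑ j ∈ Finset.range A, Real.sin (2 * Real.pi * (A * j * x))) ^ 2 := by
  rw [sq, sq, Finset.sum_mul_sum, Finset.sum_mul_sum, ← Finset.sum_add_distrib]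
  unfold gsum
  refine Finset.sum_congr rfl fun j _ => ?_
  rw [← Finset.sum_add_distrib]
  refine Finset.sum_congr rfl fun l _ => ?_
  rw [← Real.cos_sub]
  congr 1
  ring

lemma gsum_integral (μ : Measure ℝ) [IsProbabilityMeasure μ] (A : ℕ) (D : ℝ) (hD : 0 ≤ D)
    (h : ∀ ξ : ℝ, (A : ℝ) ≤ |ξ| → ‖fourierT μ ξ‖ ≤ D) :
    Integrable (gsum A) μ ∧ ∫ x, gsum A x ∂μ ≤ A + A ^ 2 * D := by
  have hi : ∀ j ∈ Finset.range A, ∀ l ∈ Finset.range A, Integrable (fun x : ℝ =>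
      Real.cos (2 * Real.pi * ((A : ℝ) * ((j : ℝ) - l)) * x)) μ :=
    fun j _ l _ => integrable_cos_aux μ _
  refine ⟨integrable_finsetSum _ fun j hj => integrable_finsetSum _ fun l hl => hi j hj l hl, ?_⟩
  unfold gsum
  rw [integral_finsetSum _ fun j hj => integrable_finsetSum _ fun l hl => hi j hj l hl]
  have : ∀ j ∈ Finset.range A, ∫ x, ∑ l ∈ Finset.range A,
      Real.cos (2 * Real.pi * ((A : ℝ) * ((j : ℝ) - l)) * x) ∂μ ≤ 1 + A * D := by
    intro j hj
    rw [integral_finsetSum _ fun l hl => hi j hj l hl]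
    calc _ ≤ ∑ l ∈ Finset.range A, ((if j = l then 1 else 0) + D) := by
          refine Finset.sum_le_sum fun l _ => ?_
          split_ifs with hjl
          · subst hjl
            simpa using hD
          · rw [zero_add]
            refine (integral_cos_aux μ _).trans (h _ ?_)
            rw [abs_mul, Nat.abs_cast]
            have h1 : (1 : ℝ) ≤ |(j : ℝ) - l| := by
              have : (1 : ℤ) ≤ |(j : ℤ) - l| := Int.one_le_abs (by omega)
              exact_mod_cast this
            nlinarith [(Nat.cast_nonneg A : (0 : ℝ) ≤ A)]
      _ = 1 + A * D := by
          rw [Finset.sum_add_distrib, Finset.sum_ite_eq, if_pos hj]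
          simp
  calc _ ≤ ∑ j ∈ Finset.range A, (1 + A * D) := Finset.sum_le_sum this
    _ = _ := by
      simp
      ring

lemma gsum_measure (μ : Measure ℝ) [IsProbabilityMeasure μ] (A : ℕ) (hA : 1 ≤ A) (D : ℝ)
    (hD : 0 ≤ D)
    (h : ∀ ξ : ℝ, (A : ℝ) ≤ |ξ| → ‖fourierT μ ξ‖ ≤ D) :
    μ {x | (A : ℝ) ^ 2 / 4 ≤ gsum A x} ≤ ENNReal.ofReal (4 * (1 / A + D)) := by
  obtain ⟨h1, h2⟩ := gsum_integral μ A D hD h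
  have h3 := mul_meas_ge_le_integral_of_nonneg (μ := μ) (f := gsum A)
    (Eventually.of_forall fun x => by
      rw [gsum_eq]
      simp only [Pi.zero_apply]
      positivity) h1 ((A : ℝ) ^ 2 / 4)
  have hA' : (0 : ℝ) < A := by exact_mod_cast hA
  rw [← ofReal_measureReal]
  apply ENNReal.ofReal_le_ofReal
  have h4 := h3.trans h2
  have : (A : ℝ) + A ^ 2 * D = (A : ℝ) ^ 2 / 4 * (4 * (1 / A + D)) := by
    field_simp
  rw [this] at h4
  exact le_of_mul_le_mul_left h4 (by positivity)

lemma gsum_large (q m : ℕ) (hq : 2 ≤ q) (hm : 1 ≤ m) (x : ℝ) (p : ℤ)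
    (hx : |x - p / q| < 1 / (q : ℝ) ^ (2 * m + 3)) :
    ((q ^ m : ℕ) : ℝ) ^ 2 / 4 ≤ gsum (q ^ m) x := by
  rw [gsum_eq]
  set A := q ^ m with hA
  have hq' : (2 : ℝ) ≤ q := by exact_mod_cast hq
  have hc : ∀ j ∈ Finset.range A, (1 / 2 : ℝ) ≤ Real.cos (2 * Real.pi * (A * j * x)) := by
    intro j hj
    have hj' : (j : ℝ) ≤ A := by exact_mod_cast (Finset.mem_range.1 hj).le
    set t := (A : ℝ) * j * (x - p / q) with ht
    have hAq : (A : ℝ) = q * (q : ℝ) ^ (m - 1) := by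
      rw [hA, ← pow_succ', Nat.sub_add_cancel hm]
      push_cast
      rfl
    have e : 2 * Real.pi * (A * j * x) =
        2 * Real.pi * t + ((q ^ (m - 1) * j * p : ℤ) : ℝ) * (2 * Real.pi) := by
      rw [ht, hAq]
      push_cast
      field_simp
      ring
    rw [e, Real.cos_add_int_mul_two_pi]
    have htb : |t| ≤ 1 / 8 := by
      rw [ht, abs_mul, abs_of_nonneg (by positivity)]
      calc (A : ℝ) * j * |x - p / q| ≤ A * A * (1 / (q : ℝ) ^ (2 * m + 3)) := by gcongr
        _ = 1 / (q : ℝ) ^ 3 := by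
          rw [hA]
          push_cast
          field_simp
          ring
        _ ≤ 1 / 2 ^ 3 := by gcongr
        _ = 1 / 8 := by norm_num
    have h1 := Real.one_sub_sq_div_two_le_cos (x := 2 * Real.pi * t)
    have h2 : t ^ 2 ≤ (1 / 8) ^ 2 := by
      rw [← sq_abs]
      gcongr
    have h3 : Real.pi ^ 2 ≤ 3.15 ^ 2 := by
      have := Real.pi_lt_d2
      gcongr
    have h4 : Real.pi ^ 2 * t ^ 2 ≤ 3.15 ^ 2 * (1 / 8) ^ 2 := by gcongr
    nlinarith
  have hs : (A : ℝ) / 2 ≤ ∑ j ∈ Finset.range A, Real.cos (2 * Real.pi * (A * j * x)) := by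
    calc (A : ℝ) / 2 = ∑ j ∈ Finset.range A, (1 / 2 : ℝ) := by
          simp
          ring
      _ ≤ _ := Finset.sum_le_sum hc
  have : ((A : ℝ) / 2) ^ 2 ≤ (∑ j ∈ Finset.range A, Real.cos (2 * Real.pi * (A * j * x))) ^ 2 := by
    gcongr
  nlinarith [sq_nonneg (∑ j ∈ Finset.range A, Real.sin (2 * Real.pi * (A * j * x)))]

theorem stmt10 (f : ℝ → ℝ)
    (hf : ∀ ξ, 0 ≤ ξ → 0 < f ξ ∧ f ξ < 1 / 2)
    (hsuper : ∃ ξ₀ > (0 : ℝ), ∀ ξ, ξ₀ ≤ ξ → ∀ lam : ℝ, 1 ≤ lam →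
      f (ξ ^ lam) ≤ (f ξ) ^ lam) :
    ¬ ∃ μ : Measure ℝ, IsProbabilityMeasure μ ∧ μ {x : ℝ | Liouville x}ᶜ = 0 ∧
      ∃ C > (0 : ℝ), ∃ M > (0 : ℝ),
        ∀ ξ : ℝ, M ≤ |ξ| → ‖fourierT μ ξ‖ ≤ C * f |ξ| := by
  rintro ⟨μ, hμ, hL, C, hC, M, hM, hdec⟩
  obtain ⟨K, hK, c, hc, hfK⟩ := decay_aux f hf hsuper
  obtain ⟨m, hm⟩ := exists_nat_ge (max 2 (2 / c))
  have hm2 : 2 ≤ m := by exact_mod_cast (le_max_left _ _).trans hm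
  have hmc : 2 ≤ c * m := by
    have := (le_max_right _ _).trans hm
    rwa [div_le_iff₀' hc] at this
  obtain ⟨q0, hq0⟩ := exists_nat_ge (max M (max K 2))
  set s : ℕ → Set ℝ := fun q => {x | q0 ≤ q ∧ ((q ^ m : ℕ) : ℝ) ^ 2 / 4 ≤ gsum (q ^ m) x} with hs
  have hbound : ∀ q, μ (s q) ≤ ENNReal.ofReal (4 * (1 + C) * (1 / (q : ℝ) ^ 2)) := by
    intro q
    by_cases hq : q0 ≤ q
    · have hq' : max M (max K 2) ≤ (q : ℝ) := hq0.trans (by exact_mod_cast hq)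
      have hqM : M ≤ q := (le_max_left _ _).trans hq'
      have hqK : K ≤ q := ((le_max_left _ _).trans (le_max_right _ _)).trans hq'
      have hq2 : (2 : ℝ) ≤ q := ((le_max_right _ _).trans (le_max_right _ _)).trans hq'
      have hq1 : (1 : ℝ) ≤ q := by linarith
      have hqn : 1 ≤ q := by exact_mod_cast hq1
      have hA2 : (q : ℝ) ^ 2 ≤ (q : ℝ) ^ m := pow_le_pow_right₀ hq1 hm2
      have hAq : (q : ℝ) ≤ (q : ℝ) ^ m := by nlinarith
      have hsq : s q = {x | ((q ^ m : ℕ) : ℝ) ^ 2 / 4 ≤ gsum (q ^ m) x} := by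
        ext x
        simp [hs, hq]
      rw [hsq]
      have hD : ∀ ξ : ℝ, ((q ^ m : ℕ) : ℝ) ≤ |ξ| → ‖fourierT μ ξ‖ ≤ C * (1 / (q : ℝ) ^ 2) := by
        intro ξ hξ
        push_cast at hξ
        refine (hdec ξ (by linarith)).trans ?_
        gcongr
        refine (hfK |ξ| (by linarith)).trans ?_
        calc |ξ| ^ (-c) ≤ ((q : ℝ) ^ m) ^ (-c) :=
              Real.rpow_le_rpow_of_nonpos (by positivity) hξ (by linarith)
          _ = (q : ℝ) ^ (-(c * m)) := by
              rw [← Real.rpow_natCast, ← Real.rpow_mul (by positivity)]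
              congr 1
              ring
          _ ≤ (q : ℝ) ^ (-2 : ℝ) := Real.rpow_le_rpow_of_exponent_le hq1 (by linarith)
          _ = 1 / (q : ℝ) ^ 2 := by
              rw [Real.rpow_neg (by positivity), one_div]
              norm_num
      refine (gsum_measure μ (q ^ m) (Nat.one_le_pow _ _ hqn) _ (by positivity) hD).trans ?_
      apply ENNReal.ofReal_le_ofReal
      have : 1 / ((q ^ m : ℕ) : ℝ) ≤ 1 / (q : ℝ) ^ 2 := by
        push_cast
        gcongr
      nlinarith
    · have : s q = ∅ := by
        ext x
        simp [hs, hq]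
      rw [this]
      simp
  have hsum : ∑' q, μ (s q) ≠ ⊤ := by
    have hS : Summable fun q : ℕ => 4 * (1 + C) * (1 / (q : ℝ) ^ 2) :=
      (Real.summable_one_div_nat_pow.2 (by norm_num)).mul_left _
    refine ne_top_of_le_ne_top ?_ (ENNReal.tsum_le_tsum hbound)
    rw [← ENNReal.ofReal_tsum_of_nonneg (fun q => by positivity) hS]
    exact ENNReal.ofReal_ne_top
  have hae := ae_eventually_notMem hsum
  have hLae : ∀ᵐ x ∂μ, Liouville x := hL
  obtain ⟨x, hx, hxL⟩ := (hae.and hLae).exists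
  have hfr := hxL.frequently_exists_num (2 * m + 3)
  obtain ⟨q, ⟨p, _, hp⟩, hxq, hq0', hq2⟩ :=
    (hfr.and_eventually (hx.and ((eventually_ge_atTop q0).and (eventually_ge_atTop 2)))).exists
  exact hxq ⟨hq0', gsum_large q m hq2 (by omega) x p hp⟩
end
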